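/- Work in the max-plus semiring $\mathbb R_{\max}=\mathbb R\cup\{-\infty\}$: for matrices and vectors with entries in $\mathbb R_{\max}$, $(A\otimes B)_{ij}=\max_k(A_{ik}+B_{kj})$ and $(A\otimes v)_i=\max_j(A_{ij}+v_j)$. Write $0$ for the zero vector and $\mathbf 1$ for the all-ones vector. Let $(A(n))_{n\in\mathbb Z}$ be a stationary and ergodic sequence of random $d\times d$ matrices with entries in $\mathbb R_{\max}$ such that the positive part of $\max_{ij}A_{ij}(0)$ is integrable, and set $x(n,0):=A(n-1)\otimes\cdots\otimes A(0)\otimes 0$. For such a sequence $M$ of square matrices, let $\gamma(M)\in\mathbb R\cup\{-\infty\}$ be its maximal Lyapunov exponent, i.e. the almost-sure limit of $\frac1n\max_{ij}(M(n-1)\otimes\cdots\otimes M(0))_{ij}$. The graph $\mathcal G(M)$ of a stationary sequence $M$ of square random matrices has as nodes the indices of $M$ and an arc $(i,j)$ whenever $\mathbb P(M_{ij}(0)\ne-\infty)>0$; it is called strongly connected if any node can be reached from any node by a path of length at least one. The strongly connected components (s.c.c.) of $\mathcal G(A)$ are the classes of mutual reachability, a node lying on no circuit being alone in its s.c.c.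 Write $c\to\tilde c$ for two s.c.c. (resp. $c\to i$, $i\to \tilde c$ for a node $i$) if they are equal (resp. $i\in c$, $i\in\tilde c$) or there is a path in $\mathcal G(A)$ from a node of the first to a node of the second. For a s.c.c. $c$ put $A^{(c)}(n):=(A_{ij}(n))_{i,j\in c}$, $\gamma^{(c)}:=\gamma(A^{(c)})$, $y^{(c)}(n,0):=A^{(c)}(-1)\otimes\cdots\otimes A^{(c)}(-n)\otimes 0$, $\gamma^{[c]}:=\max\{\gamma^{(\tilde c)}:c\to\tilde c\}$, and $$H_c:=\{i:\exists\,\tilde c \text{ s.c.c.},\ c\to i\to\tilde c,\ \gamma^{(\tilde c)}=\gamma^{[c]}\},\qquad A^{\{c\}}(n):=(A_{ij}(n))_{i,j\in H_c}.$$ Call $c$ dominating if $c$ is the only s.c.c. $\tilde c$ such that $c\to\tilde c\to\hat c$ for some s.c.c. $\hat c$ with $\gamma^{(\hat c)}=\gamma^{[c]}$. Assume: 1. For every s.c.c. $c$ of $\mathcal G(A)$, $A^{\{c\}}(0)\otimes 0$ is integrable (in particular $A^{\{c\}}(0)$ almost surely has at least one finite entry on each row). 2. For every dominating s.c.c. $c$,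 $\lim_n\frac1n y^{(c)}(n,0)=\gamma^{(c)}\mathbf 1$ almost surely. 3. For all disjoint subsets $I,J$ of $\{1,\dots,d\}$ such that $(A_{ij}(n))_{i,j\in I\cup J}$ almost surely has at least one finite entry on each row, $A_{ij}(n)=-\infty$ almost surely for all $i\in J$, $j\in I$, the graph $\mathcal G(B)$ of $B(n):=(A_{ij}(n))_{i,j\in I}$ is strongly connected, and $D(n):=(A_{ij}(n))_{i\in I,j\in J}$ is not almost surely identically $-\infty$, one has $$\mathbb P\bigl(\exists i\in I,\ \forall n\ge 0,\ (B(-1)\otimes\cdots\otimes B(-n)\otimes D(-n-1)\otimes 0)_i=-\infty\bigr)=0,$$ where for $n=0$ the vector is $D(-1)\otimes 0$. Then $\frac1n x(n,0)$ converges almost surely in $\mathbb R^d$, and for every $i\in\{1,\dots,d\}$, $$\lim_n\frac1n x_i(n,0)=\max\{\gamma^{(c)}: c \text{ s.c.c. with } i\to c\}\quad\text{almost surely.}$$ -/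

import Mathlib

open Filter MeasureTheory Topology

noncomputable section

/-! Elements of `ℝ_max = ℝ ∪ {-∞}` are extended reals different from `⊤`; `-∞` is `⊥`, and
`⊥ + x = ⊥` for every `x`. -/

/-- Max-plus action of a matrix on a vector: `(M ⊗ v) i = max_j (M i j + v j)`. -/
def mpVec {ι κ : Type*} (M : ι → κ → EReal) (v : κ → EReal) : ι → EReal :=
  fun i => ⨆ j, M i j + v j

/-- `xVec M n = x(n,0) = M(n-1) ⊗ ⋯ ⊗ M(0) ⊗ 0`. -/
def xVec {ι : Type*} (M : ℤ → ι → ι → EReal) : ℕ → ι → EReal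
  | 0 => fun _ => 0
  | n + 1 => mpVec (M n) (xVec M n)

/-- `pastAct M n v = M(-1) ⊗ ⋯ ⊗ M(-n) ⊗ v`. -/
def pastAct {ι : Type*} (M : ℤ → ι → ι → EReal) : ℕ → (ι → EReal) → ι → EReal
  | 0, v => v
  | n + 1, v => pastAct M n (mpVec (M (-(n : ℤ) - 1)) v)

/-- `yVec M n = y(n,0) = M(-1) ⊗ ⋯ ⊗ M(-n) ⊗ 0`. -/
def yVec {ι : Type*} (M : ℤ → ι → ι → EReal) (n : ℕ) : ι → EReal :=
  pastAct M n (fun _ => 0)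

/-- `(1/n) · x` for an extended real `x`. -/
def mpScale (n : ℕ) (x : EReal) : EReal := (((n : ℝ)⁻¹ : ℝ) : EReal) * x

/-- The submatrix with rows in `I` and columns in `J`. -/
def subMat {ι : Type*} (I J : Set ι) (M : ι → ι → EReal) : I → J → EReal :=
  fun i j => M i j

/-- The two-sided sequence of random matrices `A` is stationary and ergodic: its law on the space
of two-sided sequences is invariant and ergodic under the shift. -/
def StationaryErgodic {Ω ι : Type*} [MeasurableSpace Ω] (μ : Measure Ω)
    (A : ℤ → Ω → ι → ι → EReal) : Prop :=
  Ergodic (fun (a : ℤ → ι → ι → EReal) (n : ℤ) => a (n + 1))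
    (μ.map (fun (ω : Ω) (n : ℤ) => A n ω))

/-- `g` is the almost-sure limit of `(1/n) · max_i x_i(n,0)`; here
`max_i x_i(n,0) = max_{ij} (A(n-1) ⊗ ⋯ ⊗ A(0))_{ij}`. -/
def IsLyapunov {Ω ι : Type*} [MeasurableSpace Ω] (μ : Measure Ω)
    (A : ℤ → Ω → ι → ι → EReal) (g : EReal) : Prop :=
  ∀ᵐ ω ∂μ, Tendsto (fun n => mpScale n (⨆ i, xVec (fun m => A m ω) n i)) atTop (𝓝 g)

/-- The maximal Lyapunov exponent `γ(A)`: the constant that is the almost-sure limit of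
`(1/n) · max_i x_i(n,0)`. -/
def lyapunov {Ω ι : Type*} [MeasurableSpace Ω] (μ : Measure Ω)
    (A : ℤ → Ω → ι → ι → EReal) : EReal :=
  Classical.epsilon (IsLyapunov μ A)

/-- The defining limit is unique, so `lyapunov` is that limit as soon as it exists. -/
theorem IsLyapunov.lyapunov_eq {Ω ι : Type*} [MeasurableSpace Ω] {μ : Measure Ω}
    [IsProbabilityMeasure μ] {A : ℤ → Ω → ι → ι → EReal} {g : EReal}
    (h : IsLyapunov μ A g) : lyapunov μ A = g := by
  have h' : IsLyapunov μ A (lyapunov μ A) := Classical.epsilon_spec (p := IsLyapunov μ A) ⟨g, h⟩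
  obtain ⟨ω, h1, h2⟩ := (h'.and h).exists
  exact tendsto_nhds_unique h1 h2

/-- Arcs of the graph `𝒢(M)` of a random matrix `M`: `(i,j)` is an arc iff
`M i j ≠ -∞` with positive probability. -/
def arcRel {Ω ι : Type*} [MeasurableSpace Ω] (μ : Measure Ω) (M : Ω → ι → ι → EReal)
    (i j : ι) : Prop :=
  0 < μ {ω | M ω i j ≠ ⊥}

/-- Every node is joined to every node by a path of length at least one. -/
def StronglyConnected {ι : Type*} (r : ι → ι → Prop) : Prop :=
  ∀ i j, Relation.TransGen r i j

/-- `c` is a strongly connected component of the graph with arc relation `r`: a class of mutual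
reachability. A node on no circuit is alone in its class. -/
def IsSCC {ι : Type*} (r : ι → ι → Prop) (c : Set ι) : Prop :=
  ∃ i, c = {j | Relation.ReflTransGen r i j ∧ Relation.ReflTransGen r j i}

/-- `i → c`: the node `i` is in `c` or there is a path from `i` to a node of `c`. -/
def nodeReach {ι : Type*} (r : ι → ι → Prop) (i : ι) (c : Set ι) : Prop :=
  ∃ j ∈ c, Relation.ReflTransGen r i j

/-- `c → c'`: for two s.c.c., they are equal or there is a path from a node of `c` to a node
of `c'`. -/
def sccReach {ι : Type*} (r : ι → ι → Prop) (c c' : Set ι) : Prop :=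
  ∃ i ∈ c, nodeReach r i c'

section Components

variable {Ω ι : Type*} [MeasurableSpace Ω] (μ : Measure Ω) (A : ℤ → Ω → ι → ι → EReal)

/-- `γ^{(c)} = γ(A^{(c)})`, where `A^{(c)}(n) = (A_{ij}(n))_{i,j ∈ c}`. -/
def gammaSCC (c : Set ι) : EReal :=
  lyapunov μ (fun n ω => subMat c c (A n ω))

/-- `E_c`: the s.c.c. that are reachable from `c`. -/
def Eset (c : Set ι) : Set (Set ι) :=
  {c' | IsSCC (arcRel μ (A 0)) c' ∧ sccReach (arcRel μ (A 0)) c c'}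

/-- `γ^{[c]} = max {γ^{(c')} : c' ∈ E_c}`. -/
def gammaDown (c : Set ι) : EReal :=
  ⨆ c' ∈ Eset μ A c, gammaSCC μ A c'

/-- `H_c`: the nodes `i` with `c → i → c'` for some s.c.c. `c'` with `γ^{(c')} = γ^{[c]}`. -/
def Hset (c : Set ι) : Set ι :=
  {i | ∃ c', IsSCC (arcRel μ (A 0)) c' ∧
    (∃ j ∈ c, Relation.ReflTransGen (arcRel μ (A 0)) j i) ∧
    nodeReach (arcRel μ (A 0)) i c' ∧ gammaSCC μ A c' = gammaDown μ A c}

/-- `G_c`: the `c₁ ∈ E_c` with `c → c₁ → c₂` for some s.c.c. `c₂` with `γ^{(c₂)} = γ^{[c]}`. -/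
def Gset (c : Set ι) : Set (Set ι) :=
  {c₁ | c₁ ∈ Eset μ A c ∧ ∃ c₂, IsSCC (arcRel μ (A 0)) c₂ ∧
    sccReach (arcRel μ (A 0)) c₁ c₂ ∧ gammaSCC μ A c₂ = gammaDown μ A c}

/-- The s.c.c. `c` is dominating: `G_c = {c}`. -/
def Dominating (c : Set ι) : Prop :=
  Gset μ A c = {c}

/-- `max {γ^{(c)} : c s.c.c. with i → c}`. -/
def cycleTime (i : ι) : EReal :=
  ⨆ (c : Set ι) (_ : IsSCC (arcRel μ (A 0)) c ∧ nodeReach (arcRel μ (A 0)) i c), gammaSCC μ A c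

end Components

end

noncomputable section

section ErgodicSums

variable {α : Type*}

/-- The maximum of `0` and the first `n` Birkhoff sums of `f`. -/
def maxBirkhoff (T : α → α) (f : α → ℝ) : ℕ → α → ℝ
  | 0, _ => 0
  | n + 1, x => max 0 (f x + maxBirkhoff T f n (T x))

theorem maxBirkhoff_nonneg (T : α → α) (f : α → ℝ) (n : ℕ) (x : α) :
    0 ≤ maxBirkhoff T f n x := by
  cases n with
  | zero => exact le_rfl
  | succ n => exact le_max_left _ _

theorem maxBirkhoff_le_succ (T : α → α) (f : α → ℝ) (n : ℕ) (x : α) :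
    maxBirkhoff T f n x ≤ maxBirkhoff T f (n + 1) x := by
  induction n generalizing x with
  | zero => exact le_max_left _ _
  | succ n ih => exact max_le_max le_rfl (by linarith [ih (T x)])

theorem birkhoffSum_le_maxBirkhoff (T : α → α) (f : α → ℝ) (n : ℕ) (x : α) :
    birkhoffSum T f n x ≤ maxBirkhoff T f n x := by
  induction n generalizing x with
  | zero => simp [maxBirkhoff]
  | succ n ih =>
    rw [birkhoffSum_succ']
    exact le_max_of_le_right (by linarith [ih (T x)])

variable [MeasurableSpace α] {ν : Measure α} {T : α → α} {f : α → ℝ}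

theorem measurable_maxBirkhoff (hT : Measurable T) (hf : Measurable f) (n : ℕ) :
    Measurable (maxBirkhoff T f n) := by
  induction n with
  | zero => exact measurable_const
  | succ n ih => exact measurable_const.max (hf.add (ih.comp hT))

theorem integrable_maxBirkhoff (hT : MeasurePreserving T ν ν) [IsFiniteMeasure ν]
    (hfi : Integrable f ν) (n : ℕ) :
    Integrable (maxBirkhoff T f n) ν := by
  induction n with
  | zero => exact integrable_const 0
  | succ n ih =>
    exact (integrable_const (0 : ℝ)).sup (hfi.add (hT.integrable_comp_of_integrable ih))

/-- Under an ergodic map, Birkhoff sums of a function with negative mean are bounded above. -/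
theorem Ergodic.ae_bddAbove_birkhoffSum [IsFiniteMeasure ν] (hT : Ergodic T ν)
    (hf : Measurable f) (hfi : Integrable f ν) (hneg : ∫ x, f x ∂ν < 0) :
    ∀ᵐ x ∂ν, ∃ C : ℝ, ∀ n, birkhoffSum T f n x ≤ C := by
  have hmono : ∀ x, Monotone fun n => maxBirkhoff T f n x := fun x =>
    monotone_nat_of_le_succ fun n => maxBirkhoff_le_succ T f n x
  set E : Set α := {x | ∃ C : ℕ, ∀ n, maxBirkhoff T f n x ≤ C} with hE
  have hEm : MeasurableSet E := by
    have : E = ⋃ C : ℕ, ⋂ n, {x | maxBirkhoff T f n x ≤ C} := by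
      ext x; simp [hE]
    rw [this]
    exact MeasurableSet.iUnion fun C => MeasurableSet.iInter fun n =>
      measurableSet_le (measurable_maxBirkhoff hT.measurable hf n) measurable_const
  have hinv : T ⁻¹' E = E := by
    ext x
    constructor
    · rintro ⟨C, hC⟩
      obtain ⟨D, hD⟩ := exists_nat_ge (max 0 (f x + C))
      refine ⟨D, fun n => (maxBirkhoff_le_succ T f n x).trans ?_⟩
      exact (max_le_max le_rfl (by linarith [hC n])).trans hD
    · rintro ⟨C, hC⟩
      obtain ⟨D, hD⟩ := exists_nat_ge (C - f x)
      refine ⟨D, fun n => ?_⟩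
      have h := (le_max_right _ _).trans (hC (n + 1))
      linarith
  rcases hT.ae_mem_or_ae_notMem hEm hinv with h | h
  · filter_upwards [h] with x hx
    obtain ⟨C, hC⟩ := hx
    exact ⟨C, fun n => (birkhoffSum_le_maxBirkhoff T f n x).trans (hC n)⟩
  · exfalso
    have hint : ∀ n, Integrable (maxBirkhoff T f n) ν :=
      integrable_maxBirkhoff hT.toMeasurePreserving hfi
    have hlim : Tendsto (fun n => ∫ x, (maxBirkhoff T f (n + 1) x - maxBirkhoff T f n (T x)) ∂ν)
        atTop (𝓝 (∫ x, f x ∂ν)) := by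
      refine tendsto_integral_of_dominated_convergence (fun x => |f x|) ?_ hfi.abs ?_ ?_
      · intro n
        exact ((measurable_maxBirkhoff hT.measurable hf (n + 1)).sub
          ((measurable_maxBirkhoff hT.measurable hf n).comp hT.measurable)).aestronglyMeasurable
      · refine fun n => .of_forall fun x => ?_
        have h0 := maxBirkhoff_nonneg T f n (T x)
        rw [Real.norm_eq_abs, maxBirkhoff]
        rcases abs_cases (f x) with h | h <;>
          rcases max_cases 0 (f x + maxBirkhoff T f n (T x)) with h' | h' <;>
          rw [abs_le] <;> constructor <;> linarith
      · filter_upwards [h] with x hx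
        have hx' : T x ∉ E := fun hh => hx (by rw [← hinv]; exact hh)
        refine tendsto_const_nhds.congr' ?_
        obtain ⟨C, hC⟩ := exists_nat_ge (-f x)
        have : ∃ n, (C : ℝ) < maxBirkhoff T f n (T x) := by
          by_contra! hcon
          exact hx' ⟨C, hcon⟩
        obtain ⟨n, hn⟩ := this
        filter_upwards [eventually_ge_atTop n] with m hm
        have h1 : (C : ℝ) < maxBirkhoff T f m (T x) := hn.trans_le (hmono (T x) hm)
        rw [maxBirkhoff, max_eq_right (by linarith)]
        ring
    have hge : ∀ n, 0 ≤ ∫ x, (maxBirkhoff T f (n + 1) x - maxBirkhoff T f n (T x)) ∂ν := by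
      intro n
      have hcomp : Integrable (fun x => maxBirkhoff T f n (T x)) ν :=
        hT.toMeasurePreserving.integrable_comp_of_integrable (hint n)
      have hmap : ∫ x, maxBirkhoff T f n (T x) ∂ν = ∫ x, maxBirkhoff T f n x ∂ν := by
        conv_rhs => rw [← hT.toMeasurePreserving.map_eq]
        exact (integral_map hT.measurable.aemeasurable
          (measurable_maxBirkhoff hT.measurable hf n).aestronglyMeasurable).symm
      rw [integral_sub (hint _) hcomp, hmap]
      exact sub_nonneg.2 (integral_mono (hint n) (hint _) fun x => maxBirkhoff_le_succ T f n x)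
    exact absurd (ge_of_tendsto' hlim hge) (not_le.2 hneg)

/-- The upper half of the pointwise ergodic theorem. -/
theorem Ergodic.ae_eventually_birkhoffSum_le [IsProbabilityMeasure ν] (hT : Ergodic T ν)
    (hf : Measurable f) (hfi : Integrable f ν) {v : ℝ} (hv : ∫ x, f x ∂ν < v) :
    ∀ᵐ x ∂ν, ∀ᶠ n : ℕ in atTop, birkhoffSum T f n x ≤ v * n := by
  obtain ⟨w, hw, hwv⟩ := exists_between hv
  have h := hT.ae_bddAbove_birkhoffSum (f := fun x => f x - w) (hf.sub_const w)
    (hfi.sub (integrable_const w)) (by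
      rw [integral_sub hfi (integrable_const w)]
      simpa using hw)
  filter_upwards [h] with x ⟨C, hC⟩
  obtain ⟨N, hN⟩ := exists_nat_ge (C / (v - w))
  filter_upwards [eventually_ge_atTop N] with n hn
  have h1 := hC n
  have h2 : birkhoffSum T (fun x => f x - w) n x = birkhoffSum T f n x - n * w := by
    simp [birkhoffSum]
  have h3 : C ≤ n * (v - w) := by
    rw [div_le_iff₀ (by linarith)] at hN
    have : (N : ℝ) ≤ n := by exact_mod_cast hn
    nlinarith
  nlinarith

/-- The values of an integrable function along an orbit grow sublinearly, uniformly on initial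
segments. -/
theorem Ergodic.ae_eventually_forall_le_mul [IsProbabilityMeasure ν] (hT : Ergodic T ν)
    (hf : Measurable f) (hfi : Integrable f ν) {ε : ℝ} (hε : 0 < ε) :
    ∀ᵐ x ∂ν, ∀ᶠ n : ℕ in atTop, ∀ k ≤ n, f (T^[k] x) ≤ ε * n := by
  have hup := hT.ae_eventually_birkhoffSum_le hf hfi (v := ∫ x, f x ∂ν + ε / 4) (by linarith)
  have hlo := hT.ae_eventually_birkhoffSum_le hf.neg hfi.neg
    (v := - ∫ x, f x ∂ν + ε / 4) (by
      have : ∫ x, (-f) x ∂ν = - ∫ x, f x ∂ν := integral_neg f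
      rw [this]; linarith)
  filter_upwards [hup, hlo] with x h1 h2
  set m := ∫ x, f x ∂ν
  obtain ⟨N, hN⟩ := eventually_atTop.1 (h1.and h2)
  obtain ⟨B, hB⟩ : ∃ B : ℝ, ∀ k < N, f (T^[k] x) ≤ B :=
    ⟨∑ k ∈ Finset.range N, |f (T^[k] x)|, fun k hk => (le_abs_self _).trans
      (Finset.single_le_sum (f := fun k => |f (T^[k] x)|) (fun _ _ => abs_nonneg _)
        (Finset.mem_range.2 hk))⟩
  obtain ⟨M, hM⟩ := exists_nat_ge (max (B / ε) (2 * (|m| + ε) / ε))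
  filter_upwards [eventually_ge_atTop M] with n hn k hk
  have hn' : (M : ℝ) ≤ n := by exact_mod_cast hn
  have hk' : (k : ℝ) ≤ n := by exact_mod_cast hk
  rcases lt_or_ge k N with hkN | hkN
  · refine (hB k hkN).trans ?_
    have := (le_max_left _ _).trans (hM.trans hn')
    rw [div_le_iff₀ hε] at this
    linarith
  · have ha := (hN (k + 1) (by omega)).1
    have hb := (hN k hkN).2
    rw [birkhoffSum_succ] at ha
    have hc : birkhoffSum T (-f) k x = - birkhoffSum T f k x := by
      simp [birkhoffSum]
    rw [hc] at hb
    push_cast at ha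
    have := (le_max_right _ _).trans (hM.trans hn')
    rw [div_le_iff₀ hε] at this
    have hm := le_abs_self m
    nlinarith

end ErgodicSums

section GreedyCovering

variable {α : Type*}

/-- The starting points of no block of length in `[1, K]` on which the bound of slope `u` holds. -/
def badSet (Q : ℕ → ℝ → α → Prop) (u : ℝ) (K : ℕ) : Set α :=
  {x | ∀ m, 1 ≤ m → m ≤ K → ¬ Q m (u * m) x}

/-- The excess cost of a single step from a bad point. -/
def badCost (Q : ℕ → ℝ → α → Prop) (u : ℝ) (K : ℕ) (p : α → ℝ) : α → ℝ :=
  (badSet Q u K).indicator fun x => p x + |u|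

theorem badCost_nonneg {Q : ℕ → ℝ → α → Prop} {u : ℝ} {K : ℕ} {p : α → ℝ} (hp : ∀ x, 0 ≤ p x)
    (x : α) : 0 ≤ badCost Q u K p x :=
  Set.indicator_nonneg (fun y _ => add_nonneg (hp y) (abs_nonneg u)) x

/-- `Q n r x` bounds by `r` a subadditive cost of the orbit segment of length `n` from `x`. -/
structure IsCostBound (T : α → α) (Q : ℕ → ℝ → α → Prop) : Prop where
  zero : ∀ x, Q 0 0 x
  mono : ∀ n r r' x, r ≤ r' → Q n r x → Q n r' x
  comp : ∀ m n r r' x, Q m r x → Q n r' (T^[m] x) → Q (m + n) (r + r') x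

variable {T : α → α} {Q : ℕ → ℝ → α → Prop} {p : α → ℝ}

theorem IsCostBound.of_steps (hQ : IsCostBound T Q) {x : α} {n : ℕ}
    (hstep : ∀ k < n, Q 1 (p (T^[k] x)) (T^[k] x)) : Q n (birkhoffSum T p n x) x := by
  induction n with
  | zero => simpa using hQ.zero x
  | succ n ih =>
    rw [birkhoffSum_succ]
    exact hQ.comp n 1 _ _ x (ih fun k hk => hstep k (by omega)) (hstep n (by omega))

/-- Covering an orbit segment greedily by good blocks of length at most `K` and bad steps. -/
theorem IsCostBound.greedy (hQ : IsCostBound T Q) (hp : ∀ x, 0 ≤ p x) {u M : ℝ} {K : ℕ}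
    (hM : 0 ≤ M) (n : ℕ) (x : α)
    (hstep : ∀ k < n, Q 1 (p (T^[k] x)) (T^[k] x)) (hpM : ∀ k < n, p (T^[k] x) ≤ M) :
    Q n (u * n + birkhoffSum T (badCost Q u K p) n x + K * (M + |u|)) x := by
  induction n using Nat.strong_induction_on generalizing x with
  | _ n ih =>
  have hK : (0 : ℝ) ≤ K * (M + |u|) := by positivity
  rcases Nat.eq_zero_or_pos n with rfl | hn
  · simpa using hQ.mono _ _ _ _ hK (hQ.zero x)
  have hsum : ∀ m ≤ n, birkhoffSum T (badCost Q u K p) m x +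
      birkhoffSum T (badCost Q u K p) (n - m) (T^[m] x) = birkhoffSum T (badCost Q u K p) n x := by
    intro m hm
    rw [← birkhoffSum_add, Nat.add_sub_cancel' hm]
  have hrec : ∀ m, 1 ≤ m → m ≤ n → Q (n - m) (u * (n - m : ℕ) +
      birkhoffSum T (badCost Q u K p) (n - m) (T^[m] x) + K * (M + |u|)) (T^[m] x) := by
    intro m hm1 hmn
    refine ih (n - m) (by omega) _ (fun k hk => ?_) (fun k hk => ?_)
    · rw [← Function.iterate_add_apply]; exact hstep _ (by omega)
    · rw [← Function.iterate_add_apply]; exact hpM _ (by omega)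
  by_cases hx : x ∈ badSet Q u K
  · have h1 := hQ.comp 1 (n - 1) _ _ x (hstep 0 hn) (hrec 1 le_rfl hn)
    rw [Nat.add_sub_cancel' hn] at h1
    refine hQ.mono _ _ _ _ ?_ h1
    rw [← hsum 1 hn, birkhoffSum_one, badCost, Set.indicator_of_mem hx, Nat.cast_sub hn]
    simp only [Function.iterate_zero, id]
    have := neg_abs_le u
    push_cast
    linarith
  · simp only [badSet, Set.mem_ofPred_eq, not_forall, not_not] at hx
    obtain ⟨m, hm1, hmK, hm⟩ := hx
    rcases le_or_gt m n with hmn | hmn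
    · have h1 := hQ.comp m (n - m) _ _ x hm (hrec m hm1 hmn)
      rw [Nat.add_sub_cancel' hmn] at h1
      refine hQ.mono _ _ _ _ ?_ h1
      rw [← hsum m hmn, Nat.cast_sub hmn]
      have : 0 ≤ birkhoffSum T (badCost Q u K p) m x :=
        Finset.sum_nonneg fun k _ => badCost_nonneg hp _
      linarith
    · refine hQ.mono _ _ _ _ ?_ (hQ.of_steps hstep)
      have h1 : birkhoffSum T p n x ≤ n * M := by
        refine (Finset.sum_le_sum fun k hk => hpM k (Finset.mem_range.1 hk)).trans ?_
        simp
      have h2 : 0 ≤ birkhoffSum T (badCost Q u K p) n x :=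
        Finset.sum_nonneg fun k _ => badCost_nonneg hp _
      have h3 : (n : ℝ) ≤ K := by exact_mod_cast (by omega : n ≤ K)
      have h4 := neg_abs_le u
      have h5 : (n : ℝ) * M ≤ K * M := mul_le_mul_of_nonneg_right h3 hM
      have h6 : (n : ℝ) * |u| ≤ K * |u| := mul_le_mul_of_nonneg_right h3 (abs_nonneg u)
      nlinarith [Nat.cast_nonneg (α := ℝ) n]

variable [MeasurableSpace α] {ν : Measure α}

theorem measurableSet_badSet (hQm : ∀ n r, MeasurableSet {x | Q n r x}) (u : ℝ) (K : ℕ) :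
    MeasurableSet (badSet Q u K) := by
  have : badSet Q u K = ⋂ m, ⋂ (_ : 1 ≤ m), ⋂ (_ : m ≤ K), {x | Q m (u * m) x}ᶜ := by
    ext x; simp [badSet]
  rw [this]
  exact .iInter fun m => .iInter fun _ => .iInter fun _ => (hQm _ _).compl

theorem exists_integral_badCost_lt [IsFiniteMeasure ν] (hQm : ∀ n r, MeasurableSet {x | Q n r x})
    (hpi : Integrable p ν) {u : ℝ} (hgood : ∀ᵐ x ∂ν, ∃ m, 1 ≤ m ∧ Q m (u * m) x)
    {ε : ℝ} (hε : 0 < ε) : ∃ K, ∫ x, badCost Q u K p x ∂ν < ε := by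
  have hanti : Antitone (badSet Q u) := fun K L hKL x hx m h1 h2 => hx m h1 (h2.trans hKL)
  have hlim := tendsto_setIntegral_of_antitone (μ := ν) (f := fun x => p x + |u|)
    (fun K => measurableSet_badSet hQm u K) hanti
    ⟨0, (hpi.add (integrable_const |u|)).integrableOn⟩
  have hnull : ν (⋂ K, badSet Q u K) = 0 := by
    refine measure_mono_null ?_ (ae_iff.1 hgood)
    intro x hx
    rintro ⟨m, h1, h2⟩
    exact Set.mem_iInter.1 hx m m h1 le_rfl h2
  rw [setIntegral_measure_zero _ hnull] at hlim
  obtain ⟨K, hK⟩ := (hlim.eventually (gt_mem_nhds hε)).exists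
  refine ⟨K, ?_⟩
  rwa [badCost, integral_indicator (measurableSet_badSet hQm u K)]

/-- Along almost every orbit, for a suitable block length, the error terms of the greedy covering
are small. -/
theorem Ergodic.exists_greedy_error_le [IsProbabilityMeasure ν] {S : α → α} (hS : Ergodic S ν)
    (hQm : ∀ n r, MeasurableSet {x | Q n r x}) (hpm : Measurable p)
    (hpi : Integrable p ν) {u : ℝ} (hgood : ∀ᵐ x ∂ν, ∃ m, 1 ≤ m ∧ Q m (u * m) x)
    {ε : ℝ} (hε : 0 < ε) :
    ∃ K : ℕ, ∀ᵐ x ∂ν, ∀ᶠ N : ℕ in atTop, ∃ M : ℝ, 0 ≤ M ∧ (∀ k ≤ N, p (S^[k] x) ≤ M) ∧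
      birkhoffSum S (badCost Q u K p) (N + 1) x + K * (M + |u|) ≤ ε * N := by
  obtain ⟨K, hK⟩ := exists_integral_badCost_lt hQm hpi hgood (by positivity : 0 < ε / 8)
  refine ⟨K, ?_⟩
  have hgm : Measurable (badCost Q u K p) :=
    (hpm.add_const _).indicator (measurableSet_badSet hQm u K)
  have hgi : Integrable (badCost Q u K p) ν :=
    (hpi.add (integrable_const |u|)).indicator (measurableSet_badSet hQm u K)
  have hδ : 0 < ε / (4 * (K + 1)) := by positivity
  filter_upwards [hS.ae_eventually_birkhoffSum_le hgm hgi hK,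
    hS.ae_eventually_forall_le_mul hpm hpi hδ] with x h1 h2
  obtain ⟨L, hL⟩ := exists_nat_ge (4 * (K * |u|) / ε)
  filter_upwards [(tendsto_add_atTop_nat 1).eventually h1, h2, eventually_ge_atTop L,
    eventually_ge_atTop 1] with N h1 h2 h3 h4
  refine ⟨ε / (4 * (K + 1)) * N, by positivity, h2, ?_⟩
  have h3' : (L : ℝ) ≤ N := by exact_mod_cast h3
  have h4' : (1 : ℝ) ≤ N := by exact_mod_cast h4
  have h5 := hL.trans h3'
  rw [div_le_iff₀ hε] at h5
  have h6 : (K : ℝ) * (ε / (4 * (K + 1)) * N) ≤ ε / 4 * N := by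
    have : (K : ℝ) * (ε / (4 * (K + 1))) ≤ ε / 4 := by
      rw [mul_div_assoc', div_le_div_iff₀ (by positivity) (by norm_num)]
      nlinarith
    nlinarith
  push_cast at h1
  nlinarith

/-- If almost every point starts a block on which the bound of slope `u` holds, then this bound
holds, up to a sublinear error, on all segments of the orbit. -/
theorem Ergodic.ae_costBound_segments [IsProbabilityMeasure ν] (hT : Ergodic T ν)
    (hQ : IsCostBound T Q) (hQm : ∀ n r, MeasurableSet {x | Q n r x}) (hp : ∀ x, 0 ≤ p x)
    (hpm : Measurable p) (hpi : Integrable p ν)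
    (hstep : ∀ᵐ x ∂ν, ∀ k, Q 1 (p (T^[k] x)) (T^[k] x)) {u : ℝ}
    (hgood : ∀ᵐ x ∂ν, ∃ m, 1 ≤ m ∧ Q m (u * m) x) {ε : ℝ} (hε : 0 < ε) :
    ∀ᵐ x ∂ν, ∀ᶠ N : ℕ in atTop, ∀ s n, s + n ≤ N → Q n (u * n + ε * N) (T^[s] x) := by
  obtain ⟨K, hK⟩ := hT.exists_greedy_error_le hQm hpm hpi hgood hε
  filter_upwards [hK, hstep] with x h1 h2
  filter_upwards [h1] with N ⟨M, hM, hpM, herr⟩ s n hsn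
  refine hQ.mono _ _ _ _ ?_ (hQ.greedy hp (u := u) (K := K) hM n (T^[s] x) (fun k _ => ?_)
    (fun k _ => ?_))
  · have : birkhoffSum T (badCost Q u K p) n (T^[s] x) ≤
        birkhoffSum T (badCost Q u K p) (N + 1) x := by
      have h3 : birkhoffSum T (badCost Q u K p) (s + n) x ≤
          birkhoffSum T (badCost Q u K p) (N + 1) x :=
        Finset.sum_le_sum_of_subset_of_nonneg (Finset.range_mono (by omega))
          fun k _ _ => badCost_nonneg hp _
      have h4 : 0 ≤ birkhoffSum T (badCost Q u K p) s x :=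
        Finset.sum_nonneg fun k _ => badCost_nonneg hp _
      rw [birkhoffSum_add] at h3
      linarith
    linarith
  · rw [← Function.iterate_add_apply]; exact h2 _
  · rw [← Function.iterate_add_apply]; exact hpM _ (by omega)

/-- The analogue of `Ergodic.ae_costBound_segments` for blocks read backwards in time. -/
theorem Ergodic.ae_costBound_backward [IsProbabilityMeasure ν] {S : α → α} (hS : Ergodic S ν)
    (hTS : Function.LeftInverse T S) (hQ : IsCostBound T Q)
    (hQm : ∀ n r, MeasurableSet {x | Q n r x}) (hp : ∀ x, 0 ≤ p x)
    (hpm : Measurable p) (hpi : Integrable p ν)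
    (hstep : ∀ᵐ x ∂ν, ∀ k, Q 1 (p (S^[k] x)) (S^[k] x)) {u : ℝ}
    (hgood : ∀ᵐ x ∂ν, ∃ m, 1 ≤ m ∧ Q m (u * m) x) {ε : ℝ} (hε : 0 < ε) :
    ∀ᵐ x ∂ν, ∀ᶠ N : ℕ in atTop, Q N (u * N + ε * N) (S^[N] x) := by
  obtain ⟨K, hK⟩ := hS.exists_greedy_error_le hQm hpm hpi hgood hε
  filter_upwards [hK, hstep] with x h1 h2
  filter_upwards [h1] with N ⟨M, hM, hpM, herr⟩
  have hback : ∀ k ≤ N, T^[k] (S^[N] x) = S^[N - k] x := by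
    intro k hk
    rw [← Nat.add_sub_cancel' hk, Function.iterate_add_apply, hTS.iterate k]
    simp
  refine hQ.mono _ _ _ _ ?_ (hQ.greedy hp (u := u) (K := K) hM N (S^[N] x) (fun k hk => ?_)
    (fun k hk => ?_))
  · have : birkhoffSum T (badCost Q u K p) N (S^[N] x) ≤
        birkhoffSum S (badCost Q u K p) (N + 1) x := by
      rw [birkhoffSum_succ', birkhoffSum, ← Finset.sum_range_reflect]
      refine (Finset.sum_le_sum fun k hk => le_of_eq ?_).trans
        (le_add_of_nonneg_left (badCost_nonneg hp x))
      have hk := Finset.mem_range.1 hk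
      rw [hback _ (by omega), ← Function.iterate_succ_apply]
      congr 2
      omega
    linarith
  · rw [hback k hk.le]; exact h2 _
  · rw [hback k hk.le]; exact hpM _ (by omega)

end GreedyCovering


section WindowProducts

variable {ι : Type*}

/-- `windowVec F a s n = a(s+n-1) ⊗ ⋯ ⊗ a(s) ⊗ 0`, with all summations restricted to `F`. -/
def windowVec (F : Set ι) (a : ℤ → ι → ι → EReal) (s : ℤ) : ℕ → ι → EReal
  | 0 => fun _ => 0
  | n + 1 => fun i => ⨆ j ∈ F, a (s + n) i j + windowVec F a s n j

theorem windowVec_shift (F : Set ι) (a : ℤ → ι → ι → EReal) (k s : ℤ) (n : ℕ) :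
    windowVec F (fun m => a (m + k)) s n = windowVec F a (s + k) n := by
  induction n with
  | zero => rfl
  | succ n ih =>
    funext i
    simp only [windowVec, ih, add_right_comm]

theorem windowVec_mono {F G : Set ι} (h : F ⊆ G) (a : ℤ → ι → ι → EReal) (s : ℤ) (n : ℕ) (i : ι) :
    windowVec F a s n i ≤ windowVec G a s n i := by
  induction n generalizing i with
  | zero => exact le_rfl
  | succ n ih =>
    exact iSup₂_le fun j hj => le_iSup₂_of_le j (h hj) (add_le_add le_rfl (ih j))

theorem windowVec_add_le {F : Set ι} {a : ℤ → ι → ι → EReal} {s : ℤ} {m : ℕ} {r : ℝ}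
    (h : ∀ j ∈ F, windowVec F a s m j ≤ r) (n : ℕ) {i : ι} (hi : i ∈ F) :
    windowVec F a s (m + n) i ≤ windowVec F a (s + m) n i + r := by
  induction n generalizing i with
  | zero => simpa [windowVec] using h i hi
  | succ n ih =>
    refine iSup₂_le fun j hj => ?_
    refine (add_le_add le_rfl (ih hj)).trans ?_
    rw [← add_assoc]
    refine add_le_add ?_ le_rfl
    refine le_iSup₂_of_le (f := fun j _ => a (s + m + n) i j + windowVec F a (s + m) n j) j hj ?_
    rw [add_assoc s, ← Nat.cast_add]
    rfl

theorem le_windowVec_add {F : Set ι} {a : ℤ → ι → ι → EReal} {s : ℤ} {m : ℕ} {r : ℝ}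
    (h : ∀ j ∈ F, (r : EReal) ≤ windowVec F a s m j) (n : ℕ) {i : ι} (hi : i ∈ F) :
    windowVec F a (s + m) n i + r ≤ windowVec F a s (m + n) i := by
  induction n generalizing i with
  | zero => simpa [windowVec] using h i hi
  | succ n ih =>
    refine EReal.add_le_of_le_sub (iSup₂_le fun j hj => ?_)
    rw [EReal.le_sub_iff_add_le (by simp) (by simp), add_assoc]
    refine (add_le_add le_rfl (ih hj)).trans ?_
    refine le_iSup₂_of_le (f := fun j _ => a (s + (m + n : ℕ)) i j + windowVec F a s (m + n) j)
      j hj ?_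
    push_cast
    rw [add_assoc]

theorem xVec_subMat (F : Set ι) (a : ℤ → ι → ι → EReal) (n : ℕ) (i : F) :
    xVec (fun m => subMat F F (a m)) n i = windowVec F a 0 n i := by
  induction n generalizing i with
  | zero => rfl
  | succ n ih =>
    simp only [xVec, mpVec, windowVec, ih, subMat, zero_add]
    exact iSup_subtype' (p := (· ∈ F)) (f := fun j _ => a n i j + windowVec F a 0 n j) |>.symm

theorem xVec_eq_windowVec (a : ℤ → ι → ι → EReal) (n : ℕ) (i : ι) :
    xVec a n i = windowVec Set.univ a 0 n i := by
  induction n generalizing i with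
  | zero => rfl
  | succ n ih => simp [xVec, mpVec, windowVec, ih]

/-- Extending a window by a product of matrices with indices in `I ⊆ F`. -/
theorem pastAct_add_le_windowVec {F I : Set ι} (hI : I ⊆ F) {a : ℤ → ι → ι → EReal} {s : ℤ} {r : ℝ}
    (n l : ℕ) (hs : s + l = -n) (v : I → EReal)
    (hv : ∀ i : I, v i + r ≤ windowVec F a s l i) (i : I) :
    pastAct (fun m => subMat I I (a m)) n v i + r ≤ windowVec F a s (l + n) i := by
  induction n generalizing l v with
  | zero => exact hv i
  | succ n ih =>
    have := ih (l + 1) (by push_cast at hs ⊢; linarith) (mpVec (subMat I I (a (-(n : ℤ) - 1))) v) ?_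
    · rwa [add_assoc, add_comm 1 n] at this
    · intro i
      refine EReal.add_le_of_le_sub (iSup_le fun j => ?_)
      rw [EReal.le_sub_iff_add_le (by simp) (by simp), add_assoc]
      refine (add_le_add le_rfl (hv j)).trans ?_
      refine le_iSup₂_of_le (f := fun j _ => a (s + l) i j + windowVec F a s l j) j (hI j.2) ?_
      have : s + l = -(n : ℤ) - 1 := by push_cast at hs; linarith
      rw [this]
      rfl

theorem yVec_le_windowVec (F : Set ι) (a : ℤ → ι → ι → EReal) (n : ℕ) (i : F) :
    yVec (fun m => subMat F F (a m)) n i ≤ windowVec F a (-n) n i := by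
  have := pastAct_add_le_windowVec (r := 0) subset_rfl (a := a) (s := -n) n 0 (by simp)
    (fun _ : F => 0) (by simp [windowVec]) i
  simpa [yVec] using this

theorem measurable_windowVec [Countable ι] (F : Set ι) (s : ℤ) (n : ℕ) (i : ι) :
    Measurable fun a : ℤ → ι → ι → EReal => windowVec F a s n i := by
  induction n generalizing i with
  | zero => exact measurable_const
  | succ n ih =>
    refine Measurable.biSup F F.to_countable fun j _ => ?_
    exact (by fun_prop : Measurable fun a : ℤ → ι → ι → EReal => a (s + n) i j).add (ih j)

end WindowProducts

section Shift

variable {ι : Type*}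

/-- The shift on two-sided sequences of matrices. -/
def seqShift (a : ℤ → ι → ι → EReal) (n : ℤ) : ι → ι → EReal := a (n + 1)

/-- The inverse shift on two-sided sequences of matrices. -/
def seqUnshift (a : ℤ → ι → ι → EReal) (n : ℤ) : ι → ι → EReal := a (n - 1)

theorem seqShift_iterate (k : ℕ) (a : ℤ → ι → ι → EReal) :
    seqShift^[k] a = fun n => a (n + k) := by
  induction k generalizing a with
  | zero => simp
  | succ k ih =>
    rw [Function.iterate_succ_apply, ih]
    funext n
    simp only [seqShift]
    push_cast
    rw [add_assoc]

theorem seqUnshift_iterate (k : ℕ) (a : ℤ → ι → ι → EReal) :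
    seqUnshift^[k] a = fun n => a (n + (-k)) := by
  induction k generalizing a with
  | zero => simp
  | succ k ih =>
    rw [Function.iterate_succ_apply, ih]
    funext n
    simp only [seqUnshift]
    congr 1
    push_cast
    ring

theorem leftInverse_seqUnshift :
    Function.LeftInverse (seqUnshift (ι := ι)) seqShift := by
  intro a
  funext n
  simp [seqUnshift, seqShift]

theorem windowVec_seqShift (F : Set ι) (a : ℤ → ι → ι → EReal) (k : ℕ) (s : ℤ) (n : ℕ) :
    windowVec F (seqShift^[k] a) s n = windowVec F a (s + k) n := by
  rw [seqShift_iterate, windowVec_shift]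

theorem windowVec_seqUnshift (F : Set ι) (a : ℤ → ι → ι → EReal) (k : ℕ) (s : ℤ) (n : ℕ) :
    windowVec F (seqUnshift^[k] a) s n = windowVec F a (s + -k) n := by
  rw [seqUnshift_iterate, windowVec_shift]

/-- Upper bounds on the weights of windows. -/
theorem isCostBound_upper (F : Set ι) :
    IsCostBound seqShift fun n r a => ∀ i ∈ F, windowVec F a 0 n i ≤ (r : EReal) where
  zero := fun a i _ => by simp [windowVec]
  mono := fun n r r' a hr h i hi => (h i hi).trans (by exact_mod_cast hr)
  comp := fun m n r r' a h h' i hi => by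
    refine (windowVec_add_le h n hi).trans ?_
    have := h' i hi
    rw [windowVec_seqShift] at this
    rw [EReal.coe_add, add_comm (r : EReal)]
    exact add_le_add this le_rfl

/-- Lower bounds on the weights of past windows. -/
theorem isCostBound_lower (F : Set ι) :
    IsCostBound seqUnshift fun n r a => ∀ i ∈ F, ((-r : ℝ) : EReal) ≤ windowVec F a (-n) n i where
  zero := fun a i _ => by simp [windowVec]
  mono := fun n r r' a hr h i hi => le_trans (by exact_mod_cast neg_le_neg hr) (h i hi)
  comp := fun m n r r' a h h' i hi => by
    have h1 : ∀ j ∈ F, ((-r' : ℝ) : EReal) ≤ windowVec F a (-(m + n : ℕ)) n j := by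
      intro j hj
      have := h' j hj
      rw [windowVec_seqUnshift] at this
      convert this using 2
      push_cast
      ring
    have h2 := le_windowVec_add h1 m hi
    rw [add_comm n m] at h2
    refine le_trans ?_ h2
    have h3 : (-(m + n : ℕ) + (n : ℤ)) = -m := by push_cast; ring
    rw [h3, neg_add, EReal.coe_add]
    exact add_le_add (h i hi) le_rfl

theorem measurableSet_upper [Countable ι] (F : Set ι) (n : ℕ) (r : ℝ) :
    MeasurableSet {a : ℤ → ι → ι → EReal | ∀ i ∈ F, windowVec F a 0 n i ≤ (r : EReal)} := by
  have : {a : ℤ → ι → ι → EReal | ∀ i ∈ F, windowVec F a 0 n i ≤ (r : EReal)} =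
      ⋂ i, ⋂ (_ : i ∈ F), {a | windowVec F a 0 n i ≤ (r : EReal)} := by ext; simp
  rw [this]
  exact .iInter fun i => .iInter fun _ =>
    measurableSet_le (measurable_windowVec F 0 n i) measurable_const

theorem measurableSet_lower [Countable ι] (F : Set ι) (n : ℕ) (r : ℝ) :
    MeasurableSet {a : ℤ → ι → ι → EReal |
      ∀ i ∈ F, ((-r : ℝ) : EReal) ≤ windowVec F a (-n) n i} := by
  have : {a : ℤ → ι → ι → EReal | ∀ i ∈ F, ((-r : ℝ) : EReal) ≤ windowVec F a (-n) n i} =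
      ⋂ i, ⋂ (_ : i ∈ F), {a | ((-r : ℝ) : EReal) ≤ windowVec F a (-n) n i} := by ext; simp
  rw [this]
  exact .iInter fun i => .iInter fun _ =>
    measurableSet_le measurable_const (measurable_windowVec F _ n i)

end Shift

section GrowthRate

variable {ι : Type*} [Countable ι] {ν : Measure (ℤ → ι → ι → EReal)} [IsProbabilityMeasure ν]
  {p : (ℤ → ι → ι → EReal) → ℝ}

/-- The subadditive ergodic theorem for the maximal weight in `F`, in the form of one-sided bounds;
the upper bounds are uniform over windows. -/
theorem exists_growthRate (hT : Ergodic seqShift ν) (hp : ∀ a, 0 ≤ p a) (hpm : Measurable p)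
    (hpi : Integrable p ν)
    (hstep : ∀ᵐ a ∂ν, ∀ (k : ℕ) (i j : ι), a k i j ≤ (p (seqShift^[k] a) : EReal)) (F : Set ι) :
    ∃ g : EReal, g ≠ ⊤ ∧
      (∀ u : ℝ, g < u → ∀ ε : ℝ, 0 < ε → ∀ᵐ a ∂ν, ∀ᶠ N : ℕ in atTop, ∀ s n : ℕ, s + n ≤ N →
        ∀ i ∈ F, windowVec F a s n i ≤ ((u * n + ε * N : ℝ) : EReal)) ∧
      ∀ v : ℝ, v < g → ∀ᵐ a ∂ν, ∀ᶠ n : ℕ in atTop,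
        ∃ i ∈ F, ((v * n : ℝ) : EReal) < windowVec F a 0 n i := by
  set Q : ℕ → ℝ → (ℤ → ι → ι → EReal) → Prop :=
    fun n r a => ∀ i ∈ F, windowVec F a 0 n i ≤ (r : EReal) with hQdef
  have hQ : IsCostBound seqShift Q := isCostBound_upper F
  have hQm : ∀ n r, MeasurableSet {a | Q n r a} := measurableSet_upper F
  have hone : ∀ᵐ a ∂ν, ∀ k, Q 1 (p (seqShift^[k] a)) (seqShift^[k] a) := by
    filter_upwards [hstep] with a ha k i hi
    rw [windowVec_seqShift]
    refine iSup₂_le fun j hj => ?_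
    simpa [windowVec] using ha k i j
  set E : ℝ → Set (ℤ → ι → ι → EReal) :=
    fun q => {a | ∃ C : ℕ, ∃ᶠ n : ℕ in atTop, Q n (q * n + C) a} with hE
  have hEm : ∀ q, MeasurableSet (E q) := by
    intro q
    have : E q = ⋃ C : ℕ, ⋂ N : ℕ, ⋃ n : ℕ, ⋃ (_ : N ≤ n), {a | Q n (q * n + C) a} := by
      ext a
      simp [hE, frequently_atTop]
    rw [this]
    exact .iUnion fun C => .iInter fun N => .iUnion fun n => .iUnion fun _ => hQm _ _
  have hEinv : ∀ q, seqShift ⁻¹' E q ≤ᵐ[ν] E q := by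
    intro q
    filter_upwards [hone] with a ha
    rintro ⟨C, hC⟩
    obtain ⟨D, hD⟩ := exists_nat_ge (p a + C - q)
    refine ⟨D, ?_⟩
    rw [frequently_atTop] at hC ⊢
    intro N
    obtain ⟨n, hn, hQn⟩ := hC N
    refine ⟨1 + n, by omega, hQ.mono _ _ _ _ ?_ (hQ.comp 1 n _ _ a (ha 0) hQn)⟩
    push_cast
    simp only [Function.iterate_zero, id]
    linarith
  have hE01 : ∀ q, (∀ᵐ a ∂ν, a ∈ E q) ∨ ∀ᵐ a ∂ν, a ∉ E q := by
    intro q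
    rcases hT.ae_empty_or_univ_of_preimage_ae_le (hEm q).nullMeasurableSet (hEinv q) with h | h
    · exact .inr (by filter_upwards [h] with a ha; exact fun hh => Set.notMem_empty a (ha.mp hh))
    · exact .inl (by filter_upwards [h] with a ha; exact ha.mpr trivial)
  refine ⟨sInf ((fun q : ℝ => (q : EReal)) '' {q | ∀ᵐ a ∂ν, a ∈ E q}), ?_, ?_, ?_⟩
  · refine ne_top_of_le_ne_top (EReal.coe_ne_top (∫ a, p a ∂ν + 1)) (sInf_le ⟨_, ?_, rfl⟩)
    change ∀ᵐ a ∂ν, _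
    filter_upwards [hone, hT.ae_eventually_birkhoffSum_le hpm hpi
      (v := ∫ a, p a ∂ν + 1) (by linarith)] with a h1 h2
    refine ⟨0, (h2.mono fun n hn => ?_).frequently⟩
    exact hQ.mono _ _ _ _ (by simpa using hn) (hQ.of_steps fun k _ => h1 k)
  · intro u hu ε hε
    obtain ⟨_, ⟨q, hq, rfl⟩, hqu⟩ := sInf_lt_iff.1 hu
    have hqu' : q < u := EReal.coe_lt_coe_iff.1 hqu
    have hgood : ∀ᵐ a ∂ν, ∃ m, 1 ≤ m ∧ Q m (u * m) a := by
      have hq : ∀ᵐ a ∂ν, a ∈ E q := hq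
      filter_upwards [hq] with a ⟨C, hC⟩
      obtain ⟨M, hM⟩ := exists_nat_ge (C / (u - q))
      obtain ⟨n, hn, hQn⟩ := frequently_atTop.1 hC (M + 1)
      refine ⟨n, by omega, hQ.mono _ _ _ _ ?_ hQn⟩
      rw [div_le_iff₀ (by linarith)] at hM
      have : (M : ℝ) ≤ n := by exact_mod_cast (by omega : M ≤ n)
      nlinarith
    filter_upwards [hT.ae_costBound_segments hQ hQm hp hpm hpi hone hgood hε] with a ha
    filter_upwards [ha] with N hN s n hsn i hi
    have := hN s n hsn i hi
    rwa [windowVec_seqShift, zero_add] at this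
  · intro v hv
    have hnot : ¬ ∀ᵐ a ∂ν, a ∈ E v := fun h => absurd hv
      (not_lt.2 (sInf_le (Set.mem_image_of_mem _ h)))
    filter_upwards [(hE01 v).resolve_left hnot] with a ha
    have h0 : ¬ ∃ᶠ n : ℕ in atTop, Q n (v * n + (0 : ℕ)) a := fun h => ha ⟨0, h⟩
    rw [not_frequently] at h0
    filter_upwards [h0] with n hn
    simpa [hQdef] using hn

end GrowthRate


section Scaling

theorem mpScale_le_coe_iff {n : ℕ} (hn : 1 ≤ n) (x : EReal) (r : ℝ) :
    mpScale n x ≤ r ↔ x ≤ ((r * n : ℝ) : EReal) := by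
  have hn' : (0 : ℝ) < n := by exact_mod_cast hn
  have hinv : (0 : ℝ) < (n : ℝ)⁻¹ := inv_pos.2 hn'
  induction x with
  | bot => simp [mpScale, EReal.coe_mul_bot_of_pos hinv]
  | top =>
    rw [mpScale, EReal.coe_mul_top_of_pos hinv]
    simp only [top_le_iff, EReal.coe_ne_top]
  | coe x =>
    rw [mpScale, ← EReal.coe_mul, EReal.coe_le_coe_iff, EReal.coe_le_coe_iff, inv_mul_eq_div,
      div_le_iff₀ hn']

theorem coe_lt_mpScale_iff {n : ℕ} (hn : 1 ≤ n) (x : EReal) (r : ℝ) :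
    (r : EReal) < mpScale n x ↔ ((r * n : ℝ) : EReal) < x := by
  rw [← not_le, mpScale_le_coe_iff hn, not_le]

theorem tendsto_mpScale {f : ℕ → EReal} {g : EReal}
    (hup : ∀ u : ℚ, g < (u : ℝ) → ∀ᶠ n : ℕ in atTop, f n ≤ (((u : ℝ) * n : ℝ) : EReal))
    (hlo : ∀ v : ℚ, ((v : ℝ) : EReal) < g → ∀ᶠ n : ℕ in atTop, (((v : ℝ) * n : ℝ) : EReal) ≤ f n) :
    Tendsto (fun n => mpScale n (f n)) atTop (𝓝 g) := by
  refine tendsto_order.2 ⟨fun b hb => ?_, fun b hb => ?_⟩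
  · obtain ⟨w, hbw, hwg⟩ := EReal.lt_iff_exists_rat_btwn.1 hb
    obtain ⟨v, hwv, hvg⟩ := EReal.lt_iff_exists_rat_btwn.1 hwg
    filter_upwards [hlo v hvg, eventually_ge_atTop 1] with n h1 hn
    refine hbw.trans ((coe_lt_mpScale_iff hn _ _).2 (lt_of_lt_of_le ?_ h1))
    have h2 : ((w : ℝ)) < (v : ℝ) := EReal.coe_lt_coe_iff.1 hwv
    have h3 : (0 : ℝ) < n := by exact_mod_cast hn
    exact EReal.coe_lt_coe_iff.2 (mul_lt_mul_of_pos_right h2 h3)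
  · obtain ⟨w, hgw, hwb⟩ := EReal.lt_iff_exists_rat_btwn.1 hb
    filter_upwards [hup w hgw, eventually_ge_atTop 1] with n h1 hn
    exact ((mpScale_le_coe_iff hn _ _).2 h1).trans_lt hwb

end Scaling

section StationarySequence

variable {Ω ι : Type*} [MeasurableSpace Ω] {μ : Measure Ω} {A : ℤ → Ω → ι → ι → EReal}

theorem StationaryErgodic.ergodic_seqShift (h : StationaryErgodic μ A) :
    Ergodic seqShift (μ.map fun ω n => A n ω) := h

/-- The shift as a measurable equivalence. -/
def seqShiftEquiv : (ℤ → ι → ι → EReal) ≃ᵐ (ℤ → ι → ι → EReal) where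
  toFun := seqShift
  invFun := seqUnshift
  left_inv := leftInverse_seqUnshift
  right_inv := fun a => by funext n; simp [seqUnshift, seqShift]
  measurable_toFun := measurable_pi_lambda _ fun n => measurable_pi_apply (n + 1)
  measurable_invFun := measurable_pi_lambda _ fun n => measurable_pi_apply (n - 1)

theorem StationaryErgodic.ergodic_seqUnshift (h : StationaryErgodic μ A) :
    Ergodic seqUnshift (μ.map fun ω n => A n ω) :=
  Ergodic.symm (e := seqShiftEquiv) h

theorem measurable_seq (hmeas : ∀ n, Measurable (A n)) : Measurable fun ω n => A n ω :=
  measurable_pi_lambda _ hmeas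

/-- An almost sure property of the sequence holds almost surely for all its translates. -/
theorem StationaryErgodic.ae_translates (h : StationaryErgodic μ A)
    (hmeas : ∀ n, Measurable (A n)) {P : Set (ℤ → ι → ι → EReal)} (hP : MeasurableSet P)
    (hae : ∀ᵐ ω ∂μ, (fun n => A n ω) ∈ P) :
    ∀ᵐ ω ∂μ, ∀ k : ℤ, (fun n => A (n + k) ω) ∈ P := by
  have hseq := (measurable_seq hmeas).aemeasurable (μ := μ)
  have hν : ∀ᵐ a ∂(μ.map fun ω n => A n ω), a ∈ P := (ae_map_iff hseq hP).2 hae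
  rw [ae_all_iff]
  intro k
  obtain ⟨m, rfl | rfl⟩ := k.eq_nat_or_neg
  · have := ae_of_ae_map hseq
      ((h.ergodic_seqShift.quasiErgodic.toQuasiMeasurePreserving.iterate m).ae hν)
    filter_upwards [this] with ω hω
    rwa [seqShift_iterate] at hω
  · have := ae_of_ae_map hseq
      ((h.ergodic_seqUnshift.quasiErgodic.toQuasiMeasurePreserving.iterate m).ae hν)
    filter_upwards [this] with ω hω
    rwa [seqUnshift_iterate] at hω

/-- The positive part of the largest entry of the matrix at time `0`. -/
def stepCost (a : ℤ → ι → ι → EReal) : ℝ := (max (⨆ i, ⨆ j, a 0 i j) 0).toReal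

theorem stepCost_nonneg (a : ℤ → ι → ι → EReal) : 0 ≤ stepCost a :=
  EReal.toReal_nonneg (le_max_right _ _)

theorem measurable_stepCost [Countable ι] : Measurable (stepCost (ι := ι)) := by
  refine Measurable.ereal_toReal (Measurable.max ?_ measurable_const)
  refine Measurable.iSup fun i => Measurable.iSup fun j => ?_
  fun_prop

theorem le_stepCost [Finite ι] {a : ℤ → ι → ι → EReal} (ha : ∀ n i j, a n i j ≠ ⊤) (k : ℕ)
    (i j : ι) : a k i j ≤ (stepCost (seqShift^[k] a) : EReal) := by
  have hsup : ∀ {f : ι → EReal}, (∀ i, f i ≠ ⊤) → (⨆ i, f i) ≠ ⊤ := by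
    intro f hf
    have : Nonempty ι := ⟨i⟩
    obtain ⟨i₀, hi₀⟩ := exists_eq_ciSup_of_finite (f := f)
    exact hi₀ ▸ hf i₀
  have hne : max (⨆ i, ⨆ j, (seqShift^[k] a) 0 i j) 0 ≠ ⊤ := by
    rw [seqShift_iterate]
    refine ne_of_lt (max_lt (lt_top_iff_ne_top.2 ?_) EReal.zero_lt_top)
    exact hsup fun i => hsup fun j => ha _ i j
  rw [stepCost, EReal.coe_toReal hne (ne_bot_of_le_ne_bot EReal.zero_ne_bot (le_max_right _ _)),
    seqShift_iterate]
  refine le_max_of_le_left (le_iSup₂_of_le i j ?_)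
  simp

/-- The integrability and measurability assumptions on the random matrices. -/
structure IsIntegrableSequence (μ : Measure Ω) (A : ℤ → Ω → ι → ι → EReal) : Prop where
  measurable : ∀ n, Measurable (A n)
  ne_top : ∀ n ω i j, A n ω i j ≠ ⊤
  stationaryErgodic : StationaryErgodic μ A
  integrable : Integrable (fun ω => (max (⨆ i, ⨆ j, A 0 ω i j) 0).toReal) μ

theorem IsIntegrableSequence.isProbabilityMeasure_map
    [IsProbabilityMeasure μ] (h : IsIntegrableSequence μ A) :
    IsProbabilityMeasure (μ.map fun ω n => A n ω) :=
  Measure.isProbabilityMeasure_map (measurable_seq h.measurable).aemeasurable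

theorem IsIntegrableSequence.integrable_stepCost
    [Finite ι] (h : IsIntegrableSequence μ A) :
    Integrable stepCost (μ.map fun ω n => A n ω) :=
  (integrable_map_measure measurable_stepCost.aestronglyMeasurable
    (measurable_seq h.measurable).aemeasurable).2 h.integrable

theorem IsIntegrableSequence.ae_le_stepCost
    [Finite ι] (h : IsIntegrableSequence μ A) :
    ∀ᵐ a ∂(μ.map fun ω n => A n ω), ∀ (k : ℕ) (i j : ι),
      a k i j ≤ (stepCost (seqShift^[k] a) : EReal) := by
  have hm : MeasurableSet {a : ℤ → ι → ι → EReal | ∀ (k : ℕ) (i j : ι),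
      a k i j ≤ (stepCost (seqShift^[k] a) : EReal)} := by
    have : {a : ℤ → ι → ι → EReal | ∀ (k : ℕ) (i j : ι),
        a k i j ≤ (stepCost (seqShift^[k] a) : EReal)} = ⋂ k : ℕ, ⋂ i : ι, ⋂ j : ι,
        {a | a k i j ≤ (stepCost (seqShift^[k] a) : EReal)} := by ext; simp
    rw [this]
    refine .iInter fun k => .iInter fun i => .iInter fun j => measurableSet_le (by fun_prop) ?_
    exact (measurable_stepCost.comp
      (h.stationaryErgodic.ergodic_seqShift.measurable.iterate k)).coe_real_ereal
  refine (ae_map_iff (measurable_seq h.measurable).aemeasurable hm).2 (.of_forall fun ω k i j => ?_)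
  exact le_stepCost (fun n i j => h.ne_top n ω i j) k i j

/-- The maximal Lyapunov exponent of the submatrix with indices in `c` exists, is not `+∞`, and
bounds the growth of the weights of windows uniformly. -/
theorem IsIntegrableSequence.gammaSCC_spec
    [Finite ι] [IsProbabilityMeasure μ] (h : IsIntegrableSequence μ A) (c : Set ι) :
    gammaSCC μ A c ≠ ⊤ ∧ ∀ u : ℝ, gammaSCC μ A c < u → ∀ ε : ℝ, 0 < ε → ∀ᵐ ω ∂μ,
      ∀ᶠ N : ℕ in atTop, ∀ s n : ℕ, s + n ≤ N → ∀ i ∈ c,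
        windowVec c (fun m => A m ω) s n i ≤ ((u * n + ε * N : ℝ) : EReal) := by
  have := h.isProbabilityMeasure_map
  have hseq := (measurable_seq h.measurable).aemeasurable (μ := μ)
  obtain ⟨g, hgtop, hgup, hglo⟩ := exists_growthRate h.stationaryErgodic.ergodic_seqShift
    stepCost_nonneg measurable_stepCost h.integrable_stepCost h.ae_le_stepCost c
  have hg : IsLyapunov μ (fun n ω => subMat c c (A n ω)) g := by
    have h1 : ∀ᵐ ω ∂μ, ∀ u : ℚ, g < (u : ℝ) → ∀ᶠ n : ℕ in atTop, ∀ i ∈ c,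
        windowVec c (fun m => A m ω) 0 n i ≤ (((u : ℝ) * n : ℝ) : EReal) := by
      refine ae_all_iff.2 fun u => ?_
      by_cases hu : g < (u : ℝ)
      · obtain ⟨w, hgw, hwu⟩ := EReal.lt_iff_exists_real_btwn.1 hu
        have hwu' : w < u := EReal.coe_lt_coe_iff.1 hwu
        filter_upwards [ae_of_ae_map hseq (hgup w hgw (u - w) (by linarith))] with ω hω _
        filter_upwards [hω] with n hn i hi
        refine (hn 0 n (by omega) i hi).trans (EReal.coe_le_coe_iff.2 (le_of_eq ?_))
        ring
      · exact .of_forall fun ω hu' => absurd hu' hu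
    have h2 : ∀ᵐ ω ∂μ, ∀ v : ℚ, ((v : ℝ) : EReal) < g → ∀ᶠ n : ℕ in atTop, ∃ i ∈ c,
        (((v : ℝ) * n : ℝ) : EReal) < windowVec c (fun m => A m ω) 0 n i := by
      refine ae_all_iff.2 fun v => ?_
      by_cases hv : ((v : ℝ) : EReal) < g
      · filter_upwards [ae_of_ae_map hseq (hglo v hv)] with ω hω _ using hω
      · exact .of_forall fun ω hv' => absurd hv' hv
    filter_upwards [h1, h2] with ω h1 h2
    refine tendsto_mpScale (fun u hu => ?_) (fun v hv => ?_)
    · filter_upwards [h1 u hu] with n hn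
      exact iSup_le fun i => (xVec_subMat c (fun m => A m ω) n i).le.trans (hn i i.2)
    · filter_upwards [h2 v hv] with n ⟨i, hi, hn⟩
      exact hn.le.trans (le_iSup_of_le ⟨i, hi⟩ (xVec_subMat c (fun m => A m ω) n ⟨i, hi⟩).ge)
  rw [gammaSCC, hg.lyapunov_eq]
  exact ⟨hgtop, fun u hu ε hε => ae_of_ae_map hseq (hgup u hu ε hε)⟩

theorem IsIntegrableSequence.ae_eventually_entries_le
    [Finite ι] [IsProbabilityMeasure μ] (h : IsIntegrableSequence μ A) {δ : ℝ}
    (hδ : 0 < δ) :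
    ∀ᵐ ω ∂μ, ∀ᶠ N : ℕ in atTop, ∀ k ≤ N, ∀ i j, A k ω i j ≤ ((δ * N : ℝ) : EReal) := by
  have := h.isProbabilityMeasure_map
  have hseq := (measurable_seq h.measurable).aemeasurable (μ := μ)
  filter_upwards [ae_of_ae_map hseq h.ae_le_stepCost, ae_of_ae_map hseq
    (h.stationaryErgodic.ergodic_seqShift.ae_eventually_forall_le_mul measurable_stepCost
      h.integrable_stepCost hδ)] with ω h1 h2
  filter_upwards [h2] with N hN k hk i j
  exact (h1 k i j).trans (EReal.coe_le_coe_iff.2 (hN k hk))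

theorem IsIntegrableSequence.ae_eq_bot_of_not_arcRel
    [Finite ι] (h : IsIntegrableSequence μ A) :
    ∀ᵐ ω ∂μ, ∀ (k : ℤ) (i j : ι), ¬ arcRel μ (A 0) i j → A k ω i j = ⊥ := by
  have key : ∀ i j, ∀ᵐ ω ∂μ, ∀ k : ℤ, ¬ arcRel μ (A 0) i j → A k ω i j = ⊥ := by
    intro i j
    by_cases hij : arcRel μ (A 0) i j
    · exact .of_forall fun ω k h' => absurd hij h'
    · have h0 : ∀ᵐ ω ∂μ, (fun n => A n ω) ∈ {a : ℤ → ι → ι → EReal | a 0 i j = ⊥} := by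
        rw [arcRel, not_lt, nonpos_iff_eq_zero] at hij
        exact ae_iff.2 hij
      have hm : MeasurableSet {a : ℤ → ι → ι → EReal | a 0 i j = ⊥} :=
        measurableSet_eq_fun (by fun_prop) measurable_const
      filter_upwards [h.stationaryErgodic.ae_translates h.measurable hm h0] with ω hω k _
      simpa using hω k
  have := ae_all_iff.2 fun i => ae_all_iff.2 fun j => key i j
  filter_upwards [this] with ω hω k i j using hω i j k

end StationarySequence

section BlockTriangular

variable {ι : Type*}

theorem windowVec_univ_le_of_first_exit {c : Set ι} {a : ℤ → ι → ι → EReal} {s : ℤ} {N : ℕ}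
    {e : ℕ → ℝ} (htop : ∀ n < N, ∀ i j, a (s + n) i j ≠ ⊤)
    (hexit : ∀ n < N, ∀ i ∈ c, ∀ j ∉ c, a (s + n) i j + windowVec Set.univ a s n j ≤ e n)
    (n : ℕ) (hn : n ≤ N) {i : ι} (hi : i ∈ c) {z : EReal} (hz : windowVec c a s n i ≤ z)
    (hz' : ∀ t m : ℕ, t + 1 + m = n → windowVec c a (s + (t + 1)) m i + e t ≤ z) :
    windowVec Set.univ a s n i ≤ z := by
  induction n generalizing i z with
  | zero => exact hz
  | succ n ih =>
    refine iSup₂_le fun j _ => ?_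
    by_cases hj : j ∈ c
    · induction hα : a (s + n) i j with
      | bot => simp
      | top => exact absurd hα (htop n (by omega) i j)
      | coe α =>
        rw [add_comm]
        refine EReal.add_le_of_le_sub (ih (by omega) hj ?_ ?_)
        · rw [EReal.le_sub_iff_add_le (by simp) (by simp), add_comm, ← hα]
          exact le_trans (le_iSup₂_of_le
            (f := fun j _ => a (s + n) i j + windowVec c a s n j) j hj le_rfl) hz
        · intro t m htm
          rw [EReal.le_sub_iff_add_le (by simp) (by simp), add_right_comm]
          refine le_trans (add_le_add ?_ le_rfl) (hz' t (m + 1) (by omega))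
          rw [add_comm, ← hα]
          refine le_iSup₂_of_le
            (f := fun j _ => a (s + (t + 1) + m) i j + windowVec c a (s + (t + 1)) m j) j hj ?_
          have : s + (n : ℤ) = s + (t + 1) + m := by rw [← htm]; push_cast; ring
          rw [this]
    · refine (hexit n (by omega) i hi j hj).trans ?_
      have := hz' n 0 (by omega)
      simpa [windowVec] using this

theorem windowVec_univ_le_of_blocks {c G : Set ι} {a : ℤ → ι → ι → EReal} {N : ℕ} {u C : ℝ}
    (hC : 0 ≤ C) (htop : ∀ k i j, a k i j ≠ ⊤)
    (hbot : ∀ k, ∀ i ∈ c, ∀ j ∉ c, j ∉ G → a k i j = ⊥)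
    (hentry : ∀ k : ℕ, k ≤ N → ∀ i j, a k i j ≤ (C : EReal))
    (hc : ∀ s n : ℕ, s + n ≤ N → ∀ i ∈ c, windowVec c a s n i ≤ ((u * n + C : ℝ) : EReal))
    (hG : ∀ s n : ℕ, s + n ≤ N → ∀ i ∈ G,
      windowVec Set.univ a s n i ≤ ((u * n + C : ℝ) : EReal))
    (s n : ℕ) (hsn : s + n ≤ N) {i : ι} (hi : i ∈ c) :
    windowVec Set.univ a s n i ≤ ((u * n + (3 * C + |u|) : ℝ) : EReal) := by
  refine windowVec_univ_le_of_first_exit (N := n) (e := fun t => u * t + 2 * C)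
    (fun _ _ => htop _) (fun t ht i hi j hj => ?_) n le_rfl hi ?_ ?_
  · by_cases hjG : j ∈ G
    · refine (add_le_add (hentry (s + t) (by omega) i j) (hG s t (by omega) j hjG)).trans ?_
      rw [← EReal.coe_add, EReal.coe_le_coe_iff]
      linarith
    · rw [hbot _ i hi j hj hjG]
      simp
  · refine (hc s n hsn i hi).trans (EReal.coe_le_coe_iff.2 ?_)
    linarith [abs_nonneg u]
  · intro t m htm
    have h1 := hc (s + (t + 1)) m (by omega) i hi
    push_cast at h1
    refine (add_le_add h1 le_rfl).trans ?_
    norm_cast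
    rw [← htm]
    push_cast
    linarith [neg_abs_le u]

end BlockTriangular


section Components

variable {ι : Type*} {r : ι → ι → Prop}

/-- The strongly connected component of a node. -/
def sccOf (r : ι → ι → Prop) (i : ι) : Set ι :=
  {j | Relation.ReflTransGen r i j ∧ Relation.ReflTransGen r j i}

theorem isSCC_sccOf (r : ι → ι → Prop) (i : ι) : IsSCC r (sccOf r i) := ⟨i, rfl⟩

theorem self_mem_sccOf (r : ι → ι → Prop) (i : ι) : i ∈ sccOf r i := ⟨.refl, .refl⟩

theorem IsSCC.nonempty {c : Set ι} (hc : IsSCC r c) : c.Nonempty := by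
  obtain ⟨i, rfl⟩ := hc
  exact ⟨i, .refl, .refl⟩

theorem IsSCC.reach {c : Set ι} (hc : IsSCC r c) {i j : ι} (hi : i ∈ c) (hj : j ∈ c) :
    Relation.ReflTransGen r i j := by
  obtain ⟨k, rfl⟩ := hc
  exact hi.2.trans hj.1

theorem IsSCC.mem_of_reach {c : Set ι} (hc : IsSCC r c) {i j k : ι} (hi : i ∈ c) (hk : k ∈ c)
    (hij : Relation.ReflTransGen r i j) (hjk : Relation.ReflTransGen r j k) : j ∈ c := by
  obtain ⟨l, rfl⟩ := hc
  exact ⟨hi.1.trans hij, hjk.trans hk.2⟩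

theorem IsSCC.eq_of_mem {c c' : Set ι} (hc : IsSCC r c) (hc' : IsSCC r c') {i : ι} (hi : i ∈ c)
    (hi' : i ∈ c') : c = c' := by
  ext j
  exact ⟨fun hj => hc'.mem_of_reach hi' hi' (hc.reach hi hj) (hc.reach hj hi),
    fun hj => hc.mem_of_reach hi hi (hc'.reach hi' hj) (hc'.reach hj hi')⟩

theorem IsSCC.sccReach_iff {c c' : Set ι} (hc : IsSCC r c) {i : ι} (hi : i ∈ c) :
    sccReach r c c' ↔ nodeReach r i c' := by
  constructor
  · rintro ⟨k, hk, j, hj, hkj⟩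
    exact ⟨j, hj, (hc.reach hi hk).trans hkj⟩
  · exact fun h => ⟨i, hi, h⟩

/-- A component containing an arc is strongly connected. -/
theorem IsSCC.stronglyConnected {c : Set ι} (hc : IsSCC r c) {x y : ι} (hx : x ∈ c) (hy : y ∈ c)
    (hxy : r x y) : StronglyConnected fun i j : c => r i j := by
  have key : ∀ (j : c) {i : ι}, Relation.ReflTransGen r i j → ∀ hi : i ∈ c,
      Relation.ReflTransGen (fun i j : c => r i j) ⟨i, hi⟩ j := by
    intro j i hij
    induction hij using Relation.ReflTransGen.head_induction_on with
    | refl => exact fun _ => .refl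
    | head h h' ih =>
      intro hi
      have hm := hc.mem_of_reach hi j.2 (.single h) h'
      exact .head (b := ⟨_, hm⟩) h (ih hm)
  intro i j
  have h1 := key ⟨x, hx⟩ (hc.reach i.2 hx) i.2
  have h2 := key j (hc.reach hy j.2) hy
  exact .trans_right h1 (.trans_left (.single hxy) h2)

end Components

section UpperBound

variable {Ω ι : Type*} [MeasurableSpace Ω] {μ : Measure Ω} {A : ℤ → Ω → ι → ι → EReal}

/-- The weights starting from a set closed under successors grow at most at the largest rate of
its components. -/
theorem IsIntegrableSequence.upper_of_closed [Finite ι] [IsProbabilityMeasure μ]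
    (h : IsIntegrableSequence μ A) {u : ℝ} (F : Set ι)
    (hF : ∀ i ∈ F, ∀ j, arcRel μ (A 0) i j → j ∈ F)
    (hu : ∀ c, IsSCC (arcRel μ (A 0)) c → c ⊆ F → gammaSCC μ A c < u) {ε : ℝ} (hε : 0 < ε) :
    ∀ᵐ ω ∂μ, ∀ᶠ N : ℕ in atTop, ∀ s n : ℕ, s + n ≤ N → ∀ i ∈ F,
      windowVec Set.univ (fun m => A m ω) s n i ≤ ((u * n + ε * N : ℝ) : EReal) := by
  set r := arcRel μ (A 0)
  induction hcard : F.ncard using Nat.strong_induction_on generalizing F ε with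
  | _ k ih =>
  rcases F.eq_empty_or_nonempty with rfl | hne
  · exact .of_forall fun ω => .of_forall fun N s n _ i hi => absurd hi (Set.notMem_empty i)
  obtain ⟨i, hiF, hmax⟩ := Set.exists_max_image F
    (fun i => {j | Relation.ReflTransGen r i j}.ncard) F.toFinite hne
  have hreach : ∀ j, Relation.ReflTransGen r i j → j ∈ F := fun j hj => by
    induction hj with
    | refl => exact hiF
    | tail _ hstep ih => exact hF _ ih _ hstep
  have hcF : sccOf r i ⊆ F := fun j hj => hreach j hj.1
  have hG : ∀ j ∈ F \ sccOf r i, ∀ k, r j k → k ∈ F \ sccOf r i := by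
    intro j hj k hjk
    refine ⟨hF j hj.1 k hjk, fun hk => hj.2 ?_⟩
    have hji : Relation.ReflTransGen r j i := .head hjk hk.2
    have hsub : {k | Relation.ReflTransGen r i k} ⊆ {k | Relation.ReflTransGen r j k} :=
      fun k hk => hji.trans hk
    have heq := Set.eq_of_subset_of_ncard_le hsub (hmax j hj.1) (Set.toFinite _)
    have hjj : j ∈ {k | Relation.ReflTransGen r i k} := heq ▸ Relation.ReflTransGen.refl
    exact ⟨hjj, hji⟩
  have hlt : (F \ sccOf r i).ncard < k := by
    rw [← hcard]
    exact Set.ncard_lt_ncard ⟨Set.sdiff_subset, fun hsub => (hsub hiF).2 (self_mem_sccOf r i)⟩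
      F.toFinite
  have hδ : 0 < ε / 4 := by positivity
  have h1 := (h.gammaSCC_spec (sccOf r i)).2 u (hu _ (isSCC_sccOf r i) hcF) _ hδ
  have h2 := ih _ hlt (F \ sccOf r i) hδ hG
    (fun c hc hcs => hu c hc (hcs.trans Set.sdiff_subset)) rfl
  filter_upwards [h1, h2, h.ae_eventually_entries_le hδ, h.ae_eq_bot_of_not_arcRel]
    with ω h1 h2 h3 h4
  obtain ⟨L, hL⟩ := exists_nat_ge (4 * |u| / ε)
  filter_upwards [h1, h2, h3, eventually_ge_atTop L] with N h1 h2 h3 hN s n hsn j hj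
  have hLN : (L : ℝ) ≤ N := by exact_mod_cast hN
  have h5 := hL.trans hLN
  rw [div_le_iff₀ hε] at h5
  by_cases hjc : j ∈ sccOf r i
  · refine (windowVec_univ_le_of_blocks (c := sccOf r i) (G := F \ sccOf r i) (N := N) (u := u)
      (C := ε / 4 * N) (by positivity) (fun k => h.ne_top k ω) ?_ h3 h1 h2 s n hsn hjc).trans
      (EReal.coe_le_coe_iff.2 (by linarith))
    intro k x hx y hy hy'
    exact h4 k x y fun hxy => hy' ⟨hF x (hcF hx) y hxy, hy⟩
  · refine (h2 s n hsn j ⟨hj, hjc⟩).trans (EReal.coe_le_coe_iff.2 ?_)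
    nlinarith [Nat.cast_nonneg (α := ℝ) N]

end UpperBound

section MaximalComponents

variable {Ω ι : Type*} [MeasurableSpace Ω] {μ : Measure Ω} {A : ℤ → Ω → ι → ι → EReal}

theorem IsSCC.mem_Eset_self {c : Set ι} (hc : IsSCC (arcRel μ (A 0)) c) : c ∈ Eset μ A c := by
  obtain ⟨i, hi⟩ := hc.nonempty
  exact ⟨hc, i, hi, i, hi, .refl⟩

theorem IsSCC.exists_gammaSCC_eq_gammaDown [Finite ι] {c : Set ι}
    (hc : IsSCC (arcRel μ (A 0)) c) : ∃ c' ∈ Eset μ A c, gammaSCC μ A c' = gammaDown μ A c := by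
  obtain ⟨c', hc', hmax⟩ := Set.exists_max_image (Eset μ A c) (gammaSCC μ A) (Set.toFinite _)
    ⟨c, hc.mem_Eset_self⟩
  exact ⟨c', hc', le_antisymm (le_iSup₂_of_le c' hc' le_rfl) (iSup₂_le hmax)⟩

theorem IsSCC.cycleTime_eq {c : Set ι} (hc : IsSCC (arcRel μ (A 0)) c) {i : ι} (hi : i ∈ c) :
    cycleTime μ A i = gammaDown μ A c := by
  unfold cycleTime gammaDown
  refine iSup_congr fun c' => iSup_congr_Prop ?_ fun _ => rfl
  rw [Eset, Set.mem_ofPred_eq, hc.sccReach_iff hi]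

theorem IsSCC.subset_Hset [Finite ι] {c : Set ι} (hc : IsSCC (arcRel μ (A 0)) c) :
    c ⊆ Hset μ A c := by
  intro i hi
  obtain ⟨c', hc', heq⟩ := hc.exists_gammaSCC_eq_gammaDown
  exact ⟨c', hc'.1, ⟨i, hi, .refl⟩, (hc.sccReach_iff hi).1 hc'.2, heq⟩

theorem gammaDown_sccOf_eq {c : Set ι} {j : ι} (hj : j ∈ Hset μ A c) :
    gammaDown μ A (sccOf (arcRel μ (A 0)) j) = gammaDown μ A c := by
  have hjj := self_mem_sccOf (arcRel μ (A 0)) j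
  have hs := isSCC_sccOf (arcRel μ (A 0)) j
  obtain ⟨c', hc', ⟨i, hi, hij⟩, hjc', heq⟩ := hj
  refine le_antisymm (iSup₂_le fun c₁ h₁ => ?_) ?_
  · obtain ⟨k, hk, hjk⟩ := (hs.sccReach_iff hjj).1 h₁.2
    exact le_iSup₂_of_le c₁ ⟨h₁.1, i, hi, k, hk, hij.trans hjk⟩ le_rfl
  · rw [← heq]
    exact le_iSup₂_of_le c' ⟨hc', (hs.sccReach_iff hjj).2 hjc'⟩ le_rfl

theorem Hset_sccOf_subset {c : Set ι} {j : ι} (hj : j ∈ Hset μ A c) :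
    Hset μ A (sccOf (arcRel μ (A 0)) j) ⊆ Hset μ A c := by
  have heq := gammaDown_sccOf_eq hj
  obtain ⟨-, -, ⟨i, hi, hij⟩, -, -⟩ := hj
  rintro k ⟨c', hc', ⟨l, hl, hlk⟩, hkc', hγ⟩
  exact ⟨c', hc', ⟨i, hi, hij.trans (hl.1.trans hlk)⟩, hkc', hγ.trans heq⟩

theorem IsSCC.dominating_of_Hset_eq [Finite ι] {c : Set ι} (hc : IsSCC (arcRel μ (A 0)) c)
    (hH : Hset μ A c = c) : Dominating μ A c ∧ gammaSCC μ A c = gammaDown μ A c := by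
  have hsub : ∀ c₁ ∈ Gset μ A c, c₁ = c := by
    rintro c₁ ⟨⟨hc₁, i, hi, j, hj, hij⟩, c₂, hc₂, h₁₂, hγ⟩
    have hjH : j ∈ Hset μ A c := ⟨c₂, hc₂, ⟨i, hi, hij⟩, (hc₁.sccReach_iff hj).1 h₁₂, hγ⟩
    rw [hH] at hjH
    exact hc₁.eq_of_mem hc hj hjH
  obtain ⟨c', hc', heq⟩ := hc.exists_gammaSCC_eq_gammaDown
  obtain ⟨i, hi⟩ := hc'.1.nonempty
  have hc'c : c' = c := hsub c' ⟨hc', c', hc'.1, ⟨i, hi, i, hi, .refl⟩, heq⟩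
  refine ⟨Set.eq_singleton_iff_unique_mem.2
    ⟨⟨hc.mem_Eset_self, c', hc'.1, hc'.2, heq⟩, hsub⟩, hc'c ▸ heq⟩

end MaximalComponents

section BackwardLowerBound

variable {Ω ι : Type*} [MeasurableSpace Ω] {μ : Measure Ω} {A : ℤ → Ω → ι → ι → EReal}

theorem measurableSet_eventually_le_windowVec [Countable ι] (H : Set ι) (u : ℝ) (i : ι) :
    MeasurableSet {a : ℤ → ι → ι → EReal |
      ∀ᶠ m : ℕ in atTop, ((u * m : ℝ) : EReal) ≤ windowVec H a (-m) m i} := by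
  have : {a : ℤ → ι → ι → EReal |
      ∀ᶠ m : ℕ in atTop, ((u * m : ℝ) : EReal) ≤ windowVec H a (-m) m i} =
      ⋃ N : ℕ, ⋂ m : ℕ, ⋂ (_ : N ≤ m), {a | ((u * m : ℝ) : EReal) ≤ windowVec H a (-m) m i} := by
    ext a
    simp [eventually_atTop]
  rw [this]
  exact .iUnion fun N => .iInter fun m => .iInter fun _ =>
    measurableSet_le measurable_const (measurable_windowVec H _ m i)

/-- If the rows in `I` are joined to `J` by a finite past product, then the rate of growth of the
past windows ending in `J` is inherited by `I`. -/
theorem eventually_le_windowVec_of_pastAct {H I J : Set ι} (hI : I ⊆ H) (hJ : J ⊆ H)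
    {a : ℤ → ι → ι → EReal} {u v : ℝ} (huv : u < v) {n : ℕ}
    (hJv : ∀ᶠ m : ℕ in atTop, ∀ j ∈ J,
      ((v * m : ℝ) : EReal) ≤ windowVec H a (-m + (-(n + 1 : ℕ))) m j)
    (i : I) (hi : pastAct (fun m => subMat I I (a m)) n
      (mpVec (subMat I J (a (-(n : ℤ) - 1))) (fun _ => 0)) i ≠ ⊥) :
    ∀ᶠ m : ℕ in atTop, ((u * m : ℝ) : EReal) ≤ windowVec H a (-m) m i := by
  obtain ⟨C, -, hC⟩ := EReal.lt_iff_exists_real_btwn.1 (bot_lt_iff_ne_bot.2 hi)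
  obtain ⟨L, hL⟩ := exists_nat_ge ((u * (n + 1) - C) / (v - u))
  have key : ∀ᶠ m : ℕ in atTop,
      ((u * (m + (n + 1) : ℕ) : ℝ) : EReal) ≤ windowVec H a (-(m + (n + 1) : ℕ)) (m + (n + 1)) i := by
    filter_upwards [hJv, eventually_ge_atTop L] with m hm hLm
    have hLm' : (L : ℝ) ≤ m := by exact_mod_cast hLm
    have h0 := hL.trans hLm'
    rw [div_le_iff₀ (by linarith)] at h0
    have hs : (-(m + (n + 1) : ℕ) : ℤ) = -m + (-(n + 1 : ℕ)) := by push_cast; ring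
    rw [hs]
    have h1 := pastAct_add_le_windowVec hI (a := a) (s := -m + (-(n + 1 : ℕ))) (r := v * m)
      n (m + 1) (by push_cast; ring) (mpVec (subMat I J (a (-(n : ℤ) - 1))) (fun _ => 0)) ?_ i
    · have hlen : m + 1 + n = m + (n + 1) := by omega
      rw [hlen] at h1
      refine le_trans ?_ h1
      refine le_trans ?_ (add_le_add hC.le le_rfl)
      rw [← EReal.coe_add, EReal.coe_le_coe_iff]
      push_cast
      nlinarith
    · intro x
      refine EReal.add_le_of_le_sub (iSup_le fun j => ?_)
      rw [EReal.le_sub_iff_add_le (.inl (EReal.coe_ne_bot _)) (.inl (EReal.coe_ne_top _)), add_zero]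
      refine (add_le_add le_rfl (hm j j.2)).trans ?_
      refine le_iSup₂_of_le (f := fun j _ => a (-m + (-(n + 1 : ℕ)) + m) x j +
        windowVec H a (-m + (-(n + 1 : ℕ))) m j) j (hJ j.2) ?_
      have : (-m + (-(n + 1 : ℕ)) + m : ℤ) = -(n : ℤ) - 1 := by push_cast; ring
      rw [this]
      rfl
  obtain ⟨M, hM⟩ := eventually_atTop.1 key
  filter_upwards [eventually_ge_atTop (M + (n + 1))] with m hm
  have := hM (m - (n + 1)) (by omega)
  rwa [Nat.sub_add_cancel (by omega)] at this

/-- The hypotheses of the law of large numbers. -/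
structure SufficientCondition (μ : Measure Ω) (A : ℤ → Ω → ι → ι → EReal) : Prop
    extends IsIntegrableSequence μ A where
  rows : ∀ c : Set ι, IsSCC (arcRel μ (A 0)) c →
    ∀ᵐ ω ∂μ, ∀ i ∈ Hset μ A c, ∃ j ∈ Hset μ A c, A 0 ω i j ≠ ⊥
  rowsIntegrable : ∀ c : Set ι, IsSCC (arcRel μ (A 0)) c → ∀ i : Hset μ A c,
    Integrable (fun ω =>
      (mpVec (subMat (Hset μ A c) (Hset μ A c) (A 0 ω)) (fun _ => 0) i).toReal) μ
  dominating : ∀ c : Set ι, IsSCC (arcRel μ (A 0)) c → Dominating μ A c →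
    ∀ᵐ ω ∂μ, ∀ i : c,
      Tendsto (fun n => mpScale n (yVec (fun m => subMat c c (A m ω)) n i))
        atTop (𝓝 (gammaSCC μ A c))
  exits : ∀ I J : Set ι, Disjoint I J →
    (∀ᵐ ω ∂μ, ∀ i ∈ I ∪ J, ∃ j ∈ I ∪ J, A 0 ω i j ≠ ⊥) →
    (∀ᵐ ω ∂μ, ∀ i ∈ J, ∀ j ∈ I, A 0 ω i j = ⊥) →
    StronglyConnected (arcRel μ (fun ω => subMat I I (A 0 ω))) →
    ¬ (∀ᵐ ω ∂μ, ∀ i ∈ I, ∀ j ∈ J, A 0 ω i j = ⊥) →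
    μ {ω | ∃ i : I, ∀ n : ℕ,
      pastAct (fun m => subMat I I (A m ω)) n
        (mpVec (subMat I J (A (-(n : ℤ) - 1) ω)) (fun _ => 0)) i = ⊥} = 0

variable [Finite ι]

theorem SufficientCondition.ae_rows (h : SufficientCondition μ A) {c : Set ι}
    (hc : IsSCC (arcRel μ (A 0)) c) :
    ∀ᵐ ω ∂μ, ∀ k : ℤ, ∀ i ∈ Hset μ A c, ∃ j ∈ Hset μ A c, A k ω i j ≠ ⊥ := by
  have hm : MeasurableSet {a : ℤ → ι → ι → EReal |
      ∀ i ∈ Hset μ A c, ∃ j ∈ Hset μ A c, a 0 i j ≠ ⊥} := by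
    have : {a : ℤ → ι → ι → EReal | ∀ i ∈ Hset μ A c, ∃ j ∈ Hset μ A c, a 0 i j ≠ ⊥} =
        ⋂ i, ⋂ (_ : i ∈ Hset μ A c), ⋃ j, ⋃ (_ : j ∈ Hset μ A c), {a | a 0 i j = ⊥}ᶜ := by
      ext a; simp
    rw [this]
    exact .iInter fun i => .iInter fun _ => .iUnion fun j => .iUnion fun _ =>
      (measurableSet_eq_fun (by fun_prop) measurable_const).compl
  filter_upwards [h.stationaryErgodic.ae_translates h.measurable hm (h.rows c hc)] with ω hω k
  simpa using hω k

/-- From a component that is not dominating, the other nodes of `H_c` are reached almost surely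
by a finite past product. -/
theorem SufficientCondition.ae_exists_exit (h : SufficientCondition μ A) {c : Set ι}
    (hc : IsSCC (arcRel μ (A 0)) c) (hH : Hset μ A c ≠ c) :
    ∀ᵐ ω ∂μ, ∀ i : c, ∃ n : ℕ, pastAct (fun m => subMat c c (A m ω)) n
      (mpVec (subMat c (Hset μ A c \ c) (A (-(n : ℤ) - 1) ω)) (fun _ => 0)) i ≠ ⊥ := by
  have hsub := hc.subset_Hset
  by_cases harc : ∃ x ∈ c, ∃ y ∈ c, arcRel μ (A 0) x y
  · obtain ⟨x, hx, y, hy, hxy⟩ := harc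
    have h3 := h.exits c (Hset μ A c \ c) Set.disjoint_sdiff_right
      (by rw [Set.union_sdiff_cancel hsub]; exact h.rows c hc) ?_
      (hc.stronglyConnected hx hy hxy) ?_
    · have h3' : ∀ᵐ ω ∂μ, ¬ ∃ i : c, ∀ n : ℕ, pastAct (fun m => subMat c c (A m ω)) n
          (mpVec (subMat c (Hset μ A c \ c) (A (-(n : ℤ) - 1) ω)) (fun _ => 0)) i = ⊥ :=
        measure_eq_zero_iff_ae_notMem.1 h3
      filter_upwards [h3'] with ω hω
      simpa using hω
    · filter_upwards [h.ae_eq_bot_of_not_arcRel] with ω hω i hi j hj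
      refine hω 0 i j fun hij => hi.2 ?_
      obtain ⟨-, -, ⟨k, hk, hki⟩, -, -⟩ := hi.1
      exact hc.mem_of_reach hk hj hki (.single hij)
    · intro hbot
      have hno : ∀ x ∈ c, ∀ y ∈ Hset μ A c \ c, ¬ arcRel μ (A 0) x y := by
        intro x hx y hy hxy
        have : ∀ᵐ ω ∂μ, A 0 ω x y = ⊥ := by
          filter_upwards [hbot] with ω hω using hω x hx y hy
        exact hxy.ne' (ae_iff.1 this)
      obtain ⟨j, hjH, hjc⟩ : ∃ j ∈ Hset μ A c, j ∉ c := by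
        by_contra! hcon
        exact hH (subset_antisymm hcon hsub)
      obtain ⟨c', hc', ⟨i, hi, hij⟩, ⟨l, hl, hjl⟩, hγ⟩ := hjH
      refine hjc ?_
      induction hij using Relation.ReflTransGen.head_induction_on with
      | refl => exact hi
      | head hxy hyj ih =>
        refine ih ?_
        by_contra hy
        exact hno _ hi _ ⟨⟨c', hc', ⟨_, hi, .single hxy⟩, ⟨l, hl, hyj.trans hjl⟩, hγ⟩, hy⟩ hxy
  · filter_upwards [h.ae_rows hc, h.ae_eq_bot_of_not_arcRel] with ω h1 h2 i
    obtain ⟨j, hj, hij⟩ := h1 (-1) i (hsub i.2)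
    have hjc : j ∉ c := fun hjc => hij (h2 _ _ _ fun hr => harc ⟨i, i.2, j, hjc, hr⟩)
    refine ⟨0, ne_bot_of_le_ne_bot hij ?_⟩
    refine le_iSup_of_le ⟨j, hj, hjc⟩ ?_
    simp [subMat]

/-- Past windows in `H_c` grow at least at the rate `γ^{[c]}`. -/
theorem SufficientCondition.ae_eventually_le_past (h : SufficientCondition μ A) {c : Set ι}
    (hc : IsSCC (arcRel μ (A 0)) c) {u : ℝ} (hu : u < gammaDown μ A c) {i : ι} (hi : i ∈ c) :
    ∀ᵐ ω ∂μ, ∀ᶠ m : ℕ in atTop,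
      ((u * m : ℝ) : EReal) ≤ windowVec (Hset μ A c) (fun n => A n ω) (-m) m i := by
  induction hcard : {j | ∃ i ∈ c, Relation.ReflTransGen (arcRel μ (A 0)) i j}.ncard
    using Nat.strong_induction_on generalizing c u i with
  | _ k ih =>
  by_cases hH : Hset μ A c = c
  · obtain ⟨hdom, hγ⟩ := hc.dominating_of_Hset_eq hH
    filter_upwards [h.dominating c hc hdom] with ω hω
    rw [← hγ] at hu
    filter_upwards [(hω ⟨i, hi⟩).eventually (lt_mem_nhds hu), eventually_ge_atTop 1] with m hm hm1
    rw [coe_lt_mpScale_iff hm1] at hm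
    rw [hH]
    exact hm.le.trans (yVec_le_windowVec c (fun n => A n ω) m ⟨i, hi⟩)
  · obtain ⟨v, huv, hv⟩ := EReal.lt_iff_exists_real_btwn.1 hu
    have huv' : u < v := EReal.coe_lt_coe_iff.1 huv
    have hrec : ∀ j ∈ Hset μ A c \ c, ∀ᵐ ω ∂μ, ∀ l : ℤ, ∀ᶠ m : ℕ in atTop,
        ((v * m : ℝ) : EReal) ≤ windowVec (Hset μ A c) (fun n => A n ω) (-m + l) m j := by
      intro j hj
      have hlt : {x | ∃ y ∈ sccOf (arcRel μ (A 0)) j,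
          Relation.ReflTransGen (arcRel μ (A 0)) y x}.ncard < k := by
        rw [← hcard]
        obtain ⟨-, -, ⟨x, hx, hxj⟩, -, -⟩ := hj.1
        refine Set.ncard_lt_ncard ⟨?_, fun hsub => hj.2 ?_⟩ (Set.toFinite _)
        · rintro z ⟨y, hy, hyz⟩
          exact ⟨x, hx, hxj.trans (hy.1.trans hyz)⟩
        · obtain ⟨y, hy, hyx⟩ := hsub ⟨x, hx, .refl⟩
          exact hc.mem_of_reach hx hx hxj (hy.1.trans hyx)
      have h1 := ih _ hlt (isSCC_sccOf _ j) (u := v) (by rwa [gammaDown_sccOf_eq hj.1])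
        (self_mem_sccOf _ j) rfl
      have h2 := h.stationaryErgodic.ae_translates h.measurable
        (measurableSet_eventually_le_windowVec _ v j) h1
      filter_upwards [h2] with ω hω l
      filter_upwards [hω l] with m hm
      rw [windowVec_shift (a := fun n => A n ω)] at hm
      exact hm.trans (windowVec_mono (Hset_sccOf_subset hj.1) _ _ _ _)
    have hrec' : ∀ᵐ ω ∂μ, ∀ j, j ∈ Hset μ A c \ c → ∀ l : ℤ, ∀ᶠ m : ℕ in atTop,
        ((v * m : ℝ) : EReal) ≤ windowVec (Hset μ A c) (fun n => A n ω) (-m + l) m j := by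
      refine ae_all_iff.2 fun j => ?_
      by_cases hj : j ∈ Hset μ A c \ c
      · filter_upwards [hrec j hj] with ω hω _ using hω
      · exact .of_forall fun ω hj' => absurd hj' hj
    filter_upwards [hrec', h.ae_exists_exit hc hH] with ω h1 h2
    obtain ⟨n, hn⟩ := h2 ⟨i, hi⟩
    refine eventually_le_windowVec_of_pastAct hc.subset_Hset Set.sdiff_subset huv' ?_ ⟨i, hi⟩ hn
    refine eventually_all.2 fun j => ?_
    by_cases hj : j ∈ Hset μ A c \ c
    · filter_upwards [h1 j hj (-(n + 1 : ℕ))] with m hm _ using hm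
    · exact .of_forall fun m hj' => absurd hj' hj

theorem SufficientCondition.ae_exists_le_past (h : SufficientCondition μ A) {c : Set ι}
    {u : ℝ} (hu : u < gammaDown μ A c) :
    ∀ᵐ ω ∂μ, ∃ m : ℕ, 1 ≤ m ∧ ∀ i ∈ Hset μ A c,
      ((u * m : ℝ) : EReal) ≤ windowVec (Hset μ A c) (fun n => A n ω) (-m) m i := by
  have h1 : ∀ᵐ ω ∂μ, ∀ i, i ∈ Hset μ A c → ∀ᶠ m : ℕ in atTop,
      ((u * m : ℝ) : EReal) ≤ windowVec (Hset μ A c) (fun n => A n ω) (-m) m i := by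
    refine ae_all_iff.2 fun i => ?_
    by_cases hi : i ∈ Hset μ A c
    · have := h.ae_eventually_le_past (isSCC_sccOf _ i) (u := u) (by rwa [gammaDown_sccOf_eq hi])
        (self_mem_sccOf _ i)
      filter_upwards [this] with ω hω _
      filter_upwards [hω] with m hm
      exact hm.trans (windowVec_mono (Hset_sccOf_subset hi) _ _ _ _)
    · exact .of_forall fun ω hi' => absurd hi' hi
  filter_upwards [h1] with ω hω
  have h2 : ∀ᶠ m : ℕ in atTop, ∀ i, i ∈ Hset μ A c →
      ((u * m : ℝ) : EReal) ≤ windowVec (Hset μ A c) (fun n => A n ω) (-m) m i := by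
    refine eventually_all.2 fun i => ?_
    by_cases hi : i ∈ Hset μ A c
    · filter_upwards [hω i hi] with m hm _ using hm
    · exact .of_forall fun m hi' => absurd hi' hi
  obtain ⟨m, hm, hm1⟩ := (h2.and (eventually_ge_atTop 1)).exists
  exact ⟨m, hm1, hm⟩

end BackwardLowerBound


section ForwardLowerBound

variable {Ω ι : Type*} [MeasurableSpace Ω] {μ : Measure Ω} {A : ℤ → Ω → ι → ι → EReal}

/-- A bound on the row maxima in `H` of the matrix at time `-1`. -/
def rowCost [Finite ι] (H : Set ι) (a : ℤ → ι → ι → EReal) : ℝ :=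
  ∑ i ∈ H.toFinite.toFinset, |(windowVec H a (-1) 1 i).toReal|

variable [Finite ι]

theorem rowCost_nonneg (H : Set ι) (a : ℤ → ι → ι → EReal) : 0 ≤ rowCost H a :=
  Finset.sum_nonneg fun _ _ => abs_nonneg _

theorem measurable_rowCost (H : Set ι) : Measurable (rowCost (ι := ι) H) :=
  Finset.measurable_fun_sum _ fun i _ => (measurable_windowVec H (-1) 1 i).ereal_toReal.abs

theorem SufficientCondition.integrable_rowCost (h : SufficientCondition μ A) {c : Set ι}
    (hc : IsSCC (arcRel μ (A 0)) c) :
    Integrable (rowCost (Hset μ A c)) (μ.map fun ω n => A n ω) := by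
  refine integrable_finsetSum _ fun i hi => Integrable.abs ?_
  have hi : i ∈ Hset μ A c := by simpa using hi
  have h0 : Integrable (fun a : ℤ → ι → ι → EReal => (windowVec (Hset μ A c) a 0 1 i).toReal)
      (μ.map fun ω n => A n ω) := by
    refine (integrable_map_measure
      (measurable_windowVec _ _ _ _).ereal_toReal.aestronglyMeasurable
      (measurable_seq h.measurable).aemeasurable).2 ?_
    refine (h.rowsIntegrable c hc ⟨i, hi⟩).congr (.of_forall fun ω => ?_)
    have := xVec_subMat (Hset μ A c) (fun n => A n ω) 1 ⟨i, hi⟩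
    simp only [Function.comp, ← this]
    rfl
  have h1 := h.stationaryErgodic.ergodic_seqUnshift.toMeasurePreserving.integrable_comp_of_integrable
    h0
  refine h1.congr (.of_forall fun a => ?_)
  have := windowVec_seqUnshift (Hset μ A c) a 1 0 1
  simp only [Function.iterate_one] at this
  simp only [Function.comp, this]
  rfl

theorem SufficientCondition.ae_neg_rowCost_le (h : SufficientCondition μ A) {c : Set ι}
    (hc : IsSCC (arcRel μ (A 0)) c) :
    ∀ᵐ a ∂(μ.map fun ω n => A n ω), ∀ i ∈ Hset μ A c,
      ((-rowCost (Hset μ A c) a : ℝ) : EReal) ≤ windowVec (Hset μ A c) a (-(1 : ℕ)) 1 i := by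
  have hm : MeasurableSet {a : ℤ → ι → ι → EReal | ∀ i ∈ Hset μ A c,
      ((-rowCost (Hset μ A c) a : ℝ) : EReal) ≤ windowVec (Hset μ A c) a (-(1 : ℕ)) 1 i} := by
    have : {a : ℤ → ι → ι → EReal | ∀ i ∈ Hset μ A c,
        ((-rowCost (Hset μ A c) a : ℝ) : EReal) ≤ windowVec (Hset μ A c) a (-(1 : ℕ)) 1 i} =
        ⋂ i, ⋂ (_ : i ∈ Hset μ A c), {a | ((-rowCost (Hset μ A c) a : ℝ) : EReal) ≤
          windowVec (Hset μ A c) a (-(1 : ℕ)) 1 i} := by ext; simp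
    rw [this]
    exact .iInter fun i => .iInter fun _ => measurableSet_le
      (measurable_rowCost _).neg.coe_real_ereal (measurable_windowVec _ _ _ _)
  refine (ae_map_iff (measurable_seq h.measurable).aemeasurable hm).2 ?_
  filter_upwards [h.ae_rows hc] with ω hω i hi
  obtain ⟨j, hj, hij⟩ := hω (-1) i hi
  have hbot : windowVec (Hset μ A c) (fun n => A n ω) (-1) 1 i ≠ ⊥ := by
    refine ne_bot_of_le_ne_bot hij (le_iSup₂_of_le j hj ?_)
    simp [windowVec]
  have htop : windowVec (Hset μ A c) (fun n => A n ω) (-1) 1 i ≠ ⊤ := by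
    have : Nonempty (Hset μ A c) := ⟨⟨j, hj⟩⟩
    change (⨆ l ∈ Hset μ A c, A (-1 + (0 : ℕ)) ω i l +
      windowVec (Hset μ A c) (fun n => A n ω) (-1) 0 l) ≠ ⊤
    rw [← iSup_subtype'']
    obtain ⟨l, hl⟩ := exists_eq_ciSup_of_finite (f := fun l : Hset μ A c =>
      A (-1 + (0 : ℕ)) ω i l + windowVec (Hset μ A c) (fun n => A n ω) (-1) 0 l)
    rw [← hl]
    simpa [windowVec] using h.ne_top (-1) ω i l
  change _ ≤ windowVec (Hset μ A c) (fun n => A n ω) (-1) 1 i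
  rw [← EReal.coe_toReal htop hbot, EReal.coe_le_coe_iff]
  refine le_trans (neg_le_neg ?_) (neg_abs_le _)
  exact Finset.single_le_sum
    (f := fun i => |(windowVec (Hset μ A c) (fun n => A n ω) (-1) 1 i).toReal|)
    (fun _ _ => abs_nonneg _) (by simpa using hi)

/-- A growth rate of past windows of random length is a growth rate of `x(n,0)`. -/
theorem SufficientCondition.ae_eventually_le_forward [IsProbabilityMeasure μ]
    (h : SufficientCondition μ A) {c : Set ι}
    (hc : IsSCC (arcRel μ (A 0)) c) {u : ℝ}
    (hgood : ∀ᵐ a ∂(μ.map fun ω n => A n ω), ∃ m : ℕ, 1 ≤ m ∧ ∀ i ∈ Hset μ A c,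
      ((u * m : ℝ) : EReal) ≤ windowVec (Hset μ A c) a (-m) m i) {ε : ℝ} (hε : 0 < ε) :
    ∀ᵐ ω ∂μ, ∀ᶠ N : ℕ in atTop, ∀ i ∈ Hset μ A c,
      (((u - ε) * N : ℝ) : EReal) ≤ windowVec Set.univ (fun n => A n ω) 0 N i := by
  have := h.isProbabilityMeasure_map
  have hS := h.stationaryErgodic.ergodic_seqShift
  have hstep := ae_all_iff.2 fun k =>
    (hS.quasiErgodic.toQuasiMeasurePreserving.iterate k).ae (h.ae_neg_rowCost_le hc)
  have key := hS.ae_costBound_backward leftInverse_seqUnshift (isCostBound_lower (Hset μ A c))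
    (measurableSet_lower _) (rowCost_nonneg _) (measurable_rowCost _) (h.integrable_rowCost hc)
    hstep (u := -u) (by simpa using hgood) hε
  filter_upwards [ae_of_ae_map (measurable_seq h.measurable).aemeasurable key] with ω hω
  filter_upwards [hω] with N hN i hi
  have h1 := hN i hi
  rw [windowVec_seqShift, neg_add_cancel] at h1
  refine le_trans (EReal.coe_le_coe_iff.2 (le_of_eq ?_))
    (h1.trans (windowVec_mono (Set.subset_univ _) _ _ _ _))
  ring

/-- Past windows in `H_c` have a finite lower growth rate. -/
theorem SufficientCondition.exists_rate [IsProbabilityMeasure μ] (h : SufficientCondition μ A)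
    {c : Set ι} (hc : IsSCC (arcRel μ (A 0)) c) :
    ∃ u : ℝ, ∀ᵐ a ∂(μ.map fun ω n => A n ω), ∃ m : ℕ, 1 ≤ m ∧ ∀ i ∈ Hset μ A c,
      ((u * m : ℝ) : EReal) ≤ windowVec (Hset μ A c) a (-m) m i := by
  have := h.isProbabilityMeasure_map
  have hS := h.stationaryErgodic.ergodic_seqUnshift
  have hstep := ae_all_iff.2 fun k =>
    (hS.quasiErgodic.toQuasiMeasurePreserving.iterate k).ae (h.ae_neg_rowCost_le hc)
  refine ⟨-(∫ a, rowCost (Hset μ A c) a ∂(μ.map fun ω n => A n ω) + 1), ?_⟩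
  filter_upwards [hstep, hS.ae_eventually_birkhoffSum_le (measurable_rowCost _)
    (h.integrable_rowCost hc) (lt_add_one _)] with a h1 h2
  obtain ⟨m, hm, hm1⟩ := (h2.and (eventually_ge_atTop 1)).exists
  refine ⟨m, hm1, fun i hi => ?_⟩
  have hQ := isCostBound_lower (Hset μ A c)
  have := hQ.mono _ _ _ _ hm (hQ.of_steps fun k _ => h1 k) i hi
  rwa [← neg_mul] at this

end ForwardLowerBound

section LawOfLargeNumbers

variable {Ω ι : Type*} [MeasurableSpace Ω] {μ : Measure Ω} {A : ℤ → Ω → ι → ι → EReal}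
  [Finite ι] [IsProbabilityMeasure μ]

theorem IsIntegrableSequence.ae_eventually_le (h : IsIntegrableSequence μ A) (i : ι) {u : ℝ}
    (hu : cycleTime μ A i < u) :
    ∀ᵐ ω ∂μ, ∀ᶠ N : ℕ in atTop,
      windowVec Set.univ (fun n => A n ω) 0 N i ≤ ((u * N : ℝ) : EReal) := by
  obtain ⟨w, hw, hwu⟩ := EReal.lt_iff_exists_real_btwn.1 hu
  have hwu' : w < u := EReal.coe_lt_coe_iff.1 hwu
  have := h.upper_of_closed (u := w) {j | Relation.ReflTransGen (arcRel μ (A 0)) i j}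
    (fun j hj k hjk => Relation.ReflTransGen.tail hj hjk) (fun c hc hcs => ?_) (sub_pos.2 hwu')
  · filter_upwards [this] with ω hω
    filter_upwards [hω] with N hN
    refine (hN 0 N (by omega) i Relation.ReflTransGen.refl).trans
      (EReal.coe_le_coe_iff.2 (le_of_eq ?_))
    ring
  · refine lt_of_le_of_lt ?_ hw
    obtain ⟨j, hj⟩ := hc.nonempty
    exact le_iSup₂_of_le (f := fun c _ => gammaSCC μ A c) c ⟨hc, j, hj, hcs hj⟩ le_rfl

theorem SufficientCondition.ae_eventually_ge (h : SufficientCondition μ A) (i : ι) {v : ℝ}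
    (hv : v < cycleTime μ A i) :
    ∀ᵐ ω ∂μ, ∀ᶠ N : ℕ in atTop,
      ((v * N : ℝ) : EReal) ≤ windowVec Set.univ (fun n => A n ω) 0 N i := by
  obtain ⟨w, hvw, hw⟩ := EReal.lt_iff_exists_real_btwn.1 hv
  have hvw' : v < w := EReal.coe_lt_coe_iff.1 hvw
  have hc := isSCC_sccOf (arcRel μ (A 0)) i
  have hi := self_mem_sccOf (arcRel μ (A 0)) i
  rw [hc.cycleTime_eq hi] at hw
  set c := sccOf (arcRel μ (A 0)) i
  have hgood : ∀ᵐ a ∂(μ.map fun ω n => A n ω), ∃ m : ℕ, 1 ≤ m ∧ ∀ j ∈ Hset μ A c,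
      ((w * m : ℝ) : EReal) ≤ windowVec (Hset μ A c) a (-m) m j := by
    refine (ae_map_iff (measurable_seq h.measurable).aemeasurable ?_).2 (h.ae_exists_le_past hw)
    have heq : {a : ℤ → ι → ι → EReal | ∃ m : ℕ, 1 ≤ m ∧ ∀ j ∈ Hset μ A c,
        ((w * m : ℝ) : EReal) ≤ windowVec (Hset μ A c) a (-m) m j} =
        ⋃ m : ℕ, ⋃ (_ : 1 ≤ m), {a | ∀ j ∈ Hset μ A c,
          ((-(-(w * m)) : ℝ) : EReal) ≤ windowVec (Hset μ A c) a (-m) m j} := by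
      ext a
      simp only [neg_neg, Set.mem_iUnion, Set.mem_ofPred_eq, exists_prop]
    rw [heq]
    exact .iUnion fun m => .iUnion fun _ => measurableSet_lower _ m _
  filter_upwards [h.ae_eventually_le_forward hc hgood (sub_pos.2 hvw')] with ω hω
  filter_upwards [hω] with N hN
  have := hN i (hc.subset_Hset hi)
  rwa [sub_sub_cancel] at this

theorem SufficientCondition.cycleTime_ne_bot (h : SufficientCondition μ A) (i : ι) :
    cycleTime μ A i ≠ ⊥ := by
  intro hbot
  have hc := isSCC_sccOf (arcRel μ (A 0)) i
  obtain ⟨u, hu⟩ := h.exists_rate hc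
  have h1 := h.ae_eventually_le_forward hc hu one_pos
  have h2 := h.ae_eventually_le i (u := u - 2) (by rw [hbot]; exact EReal.bot_lt_coe _)
  obtain ⟨ω, h1, h2⟩ := (h1.and h2).exists
  obtain ⟨N, ⟨h1, h2⟩, hN⟩ := ((h1.and h2).and (eventually_ge_atTop 1)).exists
  have h3 := EReal.coe_le_coe_iff.1 ((h1 i (hc.subset_Hset (self_mem_sccOf _ i))).trans h2)
  have hN' : (1 : ℝ) ≤ N := by exact_mod_cast hN
  nlinarith

theorem IsIntegrableSequence.cycleTime_ne_top (h : IsIntegrableSequence μ A) (i : ι) :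
    cycleTime μ A i ≠ ⊤ := by
  have hc := isSCC_sccOf (arcRel μ (A 0)) i
  rw [hc.cycleTime_eq (self_mem_sccOf _ i)]
  obtain ⟨c', -, hc'⟩ := hc.exists_gammaSCC_eq_gammaDown
  exact hc' ▸ (h.gammaSCC_spec c').1

theorem SufficientCondition.ae_tendsto (h : SufficientCondition μ A) (i : ι) :
    ∀ᵐ ω ∂μ, Tendsto (fun n => mpScale n (xVec (fun m => A m ω) n i)) atTop
      (𝓝 (cycleTime μ A i)) := by
  have h1 : ∀ᵐ ω ∂μ, ∀ u : ℚ, cycleTime μ A i < (u : ℝ) → ∀ᶠ N : ℕ in atTop,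
      windowVec Set.univ (fun n => A n ω) 0 N i ≤ (((u : ℝ) * N : ℝ) : EReal) := by
    refine ae_all_iff.2 fun u => ?_
    by_cases hu : cycleTime μ A i < (u : ℝ)
    · filter_upwards [h.ae_eventually_le i hu] with ω hω _ using hω
    · exact .of_forall fun ω hu' => absurd hu' hu
  have h2 : ∀ᵐ ω ∂μ, ∀ v : ℚ, ((v : ℝ) : EReal) < cycleTime μ A i → ∀ᶠ N : ℕ in atTop,
      (((v : ℝ) * N : ℝ) : EReal) ≤ windowVec Set.univ (fun n => A n ω) 0 N i := by
    refine ae_all_iff.2 fun v => ?_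
    by_cases hv : ((v : ℝ) : EReal) < cycleTime μ A i
    · filter_upwards [h.ae_eventually_ge i hv] with ω hω _ using hω
    · exact .of_forall fun ω hv' => absurd hv' hv
  filter_upwards [h1, h2] with ω h1 h2
  simp only [xVec_eq_windowVec]
  exact tendsto_mpScale h1 h2

end LawOfLargeNumbers

end

theorem sufficient_condition_left_products
    {d : ℕ} {Ω : Type*} [MeasurableSpace Ω] (μ : Measure Ω) [IsProbabilityMeasure μ]
    (A : ℤ → Ω → Fin d → Fin d → EReal)
    (hmeas : ∀ n, Measurable (A n))
    (hnotop : ∀ n ω i j, A n ω i j ≠ ⊤)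
    (herg : StationaryErgodic μ A)
    (hint : Integrable (fun ω => (max (⨆ i, ⨆ j, A 0 ω i j) 0).toReal) μ)
    -- Hypothesis 1: `A^{{c}}(0)` has a finite entry on each row and `A^{{c}}(0) ⊗ 0` is integrable
    (h1 : ∀ c : Set (Fin d), IsSCC (arcRel μ (A 0)) c →
      (∀ᵐ ω ∂μ, ∀ i ∈ Hset μ A c, ∃ j ∈ Hset μ A c, A 0 ω i j ≠ ⊥) ∧
      ∀ i : Hset μ A c,
        Integrable (fun ω =>
          (mpVec (subMat (Hset μ A c) (Hset μ A c) (A 0 ω)) (fun _ => 0) i).toReal) μ)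
    -- Hypothesis 2
    (h2 : ∀ c : Set (Fin d), IsSCC (arcRel μ (A 0)) c → Dominating μ A c →
      ∀ᵐ ω ∂μ, ∀ i : c,
        Tendsto (fun n => mpScale n (yVec (fun m => subMat c c (A m ω)) n i))
          atTop (𝓝 (gammaSCC μ A c)))
    -- Hypothesis 3
    (h3 : ∀ I J : Set (Fin d), Disjoint I J →
      (∀ᵐ ω ∂μ, ∀ i ∈ I ∪ J, ∃ j ∈ I ∪ J, A 0 ω i j ≠ ⊥) →
      (∀ᵐ ω ∂μ, ∀ i ∈ J, ∀ j ∈ I, A 0 ω i j = ⊥) →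
      StronglyConnected (arcRel μ (fun ω => subMat I I (A 0 ω))) →
      ¬ (∀ᵐ ω ∂μ, ∀ i ∈ I, ∀ j ∈ J, A 0 ω i j = ⊥) →
      μ {ω | ∃ i : I, ∀ n : ℕ,
        pastAct (fun m => subMat I I (A m ω)) n
          (mpVec (subMat I J (A (-(n : ℤ) - 1) ω)) (fun _ => 0)) i = ⊥} = 0) :
    ∃ L : Fin d → ℝ,
      (∀ i, (L i : EReal) = cycleTime μ A i) ∧
      ∀ᵐ ω ∂μ, ∀ i,
        Tendsto (fun n => mpScale n (xVec (fun m => A m ω) n i)) atTop (𝓝 (L i : EReal)) := by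
  have h : SufficientCondition μ A :=
    { measurable := hmeas
      ne_top := hnotop
      stationaryErgodic := herg
      integrable := hint
      rows := fun c hc => (h1 c hc).1
      rowsIntegrable := fun c hc => (h1 c hc).2
      dominating := h2
      exits := h3 }
  have hL : ∀ i, ((cycleTime μ A i).toReal : EReal) = cycleTime μ A i := fun i =>
    EReal.coe_toReal (h.cycleTime_ne_top i) (h.cycleTime_ne_bot i)
  refine ⟨fun i => (cycleTime μ A i).toReal, hL, ae_all_iff.2 fun i => ?_⟩
  rw [hL i]
  exact h.ae_tendsto i
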